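/- arXiv:math/0411339 — 5 statements merged into one kernel-verified Lean document; each statement's English description precedes it below -/
import Mathlib

section
/- Let F_1, F_2, … be a uniformly attracting sequence of correctly ordered automorphisms of ℂ^k (each fixing the origin). Then the basin of attraction Ω = {z ∈ ℂ^k : F(n)(z) → 0 as n → ∞} is biholomorphic to ℂ^k. -/
open Metric Filter Topology

noncomputable section

/-- `ℂ^k` with the Euclidean norm. -/
abbrev Ck (k : ℕ) := EuclideanSpace ℂ (Fin k)

/-- `seqComp F n = F_{n-1} ∘ ⋯ ∘ F_0` (the composition of the first `n` maps). -/
def seqComp {α : Type*} (f : ℕ → α → α) : ℕ → α → α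
  | 0 => id
  | n + 1 => f n ∘ seqComp f n

/-- An automorphism of `ℂ^k`: a bijective holomorphic map with holomorphic inverse. -/
def IsAutomorphism {k : ℕ} (F : Ck k → Ck k) : Prop :=
  Differentiable ℂ F ∧ ∃ Finv : Ck k → Ck k, Differentiable ℂ Finv ∧
    Function.LeftInverse Finv F ∧ Function.RightInverse Finv F

/-- A set `Ω ⊆ ℂ^k` is biholomorphic to `ℂ^k`. -/
def BiholoToC {k : ℕ} (Ω : Set (Ck k)) : Prop :=
  ∃ (Ψ Φ : Ck k → Ck k),
    DifferentiableOn ℂ Ψ Ω ∧ Differentiable ℂ Φ ∧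
    (∀ w, Φ w ∈ Ω) ∧ (∀ z ∈ Ω, Φ (Ψ z) = z) ∧ (∀ w, Ψ (Φ w) = w)

/-- The matrix of the derivative of `F` at `0`, in the standard basis:
entry `(i, j)` is the `i`-th coordinate of `F'(0)` applied to the `j`-th basis vector. -/
def derivMatrix {k : ℕ} (F : Ck k → Ck k) : Matrix (Fin k) (Fin k) ℂ :=
  fun i j => fderiv ℂ F 0 (EuclideanSpace.single j 1) i

/-- `F` is in lower triangular form: `F'(0)` is a lower triangular matrix. -/
def LowerTriAtZero {k : ℕ} (F : Ck k → Ck k) : Prop :=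
  ∀ i j : Fin k, i < j → derivMatrix F i j = 0

/-- `F` (in lower triangular form, with diagonal entries `λ_1, …, λ_k` of `F'(0)`)
is correctly ordered: `|λ_j||λ_i| < |λ_l|` whenever `l ≤ j`, for every `i`. -/
def CorrectlyOrdered {k : ℕ} (F : Ck k → Ck k) : Prop :=
  LowerTriAtZero F ∧
    ∀ l j i : Fin k, l ≤ j →
      ‖derivMatrix F j j‖ * ‖derivMatrix F i i‖ < ‖derivMatrix F l l‖

/-- A sequence of correctly ordered automorphisms is uniformly attracting: there are
`0 < a < b < 1` with `a‖z‖ ≤ ‖F_n z‖ ≤ b‖z‖` on the unit ball, and `ξ < 1` with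
`|λ_{n,i}||λ_{n,j}| ≤ ξ|λ_{n,l}|` whenever `l ≤ j`, for every `i`. -/
def UniformlyAttracting {k : ℕ} (F : ℕ → Ck k → Ck k) : Prop :=
  ∃ a b : ℝ, 0 < a ∧ a < b ∧ b < 1 ∧
    (∀ n, ∀ z ∈ ball (0 : Ck k) 1, a * ‖z‖ ≤ ‖F n z‖ ∧ ‖F n z‖ ≤ b * ‖z‖) ∧
    ∃ ξ : ℝ, ξ < 1 ∧ ∀ n, ∀ l j i : Fin k, l ≤ j →
      ‖derivMatrix (F n) i i‖ * ‖derivMatrix (F n) j j‖ ≤ ξ * ‖derivMatrix (F n) l l‖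



/-! ### Complex analysis in several variables -/

section CA
variable {E : Type*} [NormedAddCommGroup E] [NormedSpace ℂ E]
  {G : Type*} [NormedAddCommGroup G] [NormedSpace ℂ G]

lemma ca_fderiv_bound {f : E → G} {c : E} {R C : ℝ} (hR : 0 < R)
    (hd : DifferentiableOn ℂ f (ball c R)) (hb : ∀ z ∈ ball c R, ‖f z‖ ≤ C) :
    ‖fderiv ℂ f c‖ ≤ 2 * C / R := by
  refine Complex.norm_fderiv_le_div_of_mapsTo_ball hd ?_ hR
  intro z hz
  rw [mem_closedBall, dist_eq_norm]
  have h1 := hb z hz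
  have h2 := hb c (mem_ball_self hR)
  have := norm_sub_le (f z) (f c)
  linarith

lemma ca_limit [CompleteSpace G] {f : ℕ → E → G} {g : E → G} {c : E} {R : ℝ} (hR : 0 < R)
    (hd : ∀ᶠ n in atTop, DifferentiableOn ℂ (f n) (ball c R))
    (hlim : TendstoUniformlyOn f g atTop (ball c R)) : DifferentiableAt ℂ g c := by
  obtain ⟨N, hN⟩ := eventually_atTop.1 hd
  have hlim' : TendstoUniformlyOn (fun n => f (n + N)) g atTop (ball c R) := by
    intro u hu
    exact (tendsto_add_atTop_nat N).eventually (hlim u hu)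
  have hd' : ∀ n, DifferentiableOn ℂ (f (n + N)) (ball c R) := fun n => hN _ (by omega)
  set F : ℕ → E → G := fun n => f (n + N) with hF
  have hC : UniformCauchySeqOn F atTop (ball c R) := hlim'.uniformCauchySeqOn
  have hsub : ∀ y ∈ ball c (R/2), ball y (R/2) ⊆ ball c R := by
    intro y hy
    apply ball_subset_ball'
    have := mem_ball.1 hy
    linarith
  have hdat : ∀ n, ∀ y ∈ ball c (R/2), DifferentiableAt ℂ (F n) y := fun n y hy =>
    (hd' n).differentiableAt (isOpen_ball.mem_nhds (ball_subset_ball (by linarith) hy))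
  have hC' : UniformCauchySeqOn (fun n => fderiv ℂ (F n)) atTop (ball c (R/2)) := by
    rw [Metric.uniformCauchySeqOn_iff] at hC ⊢
    intro ε hε
    obtain ⟨M, hM⟩ := hC (ε * R / 8) (by positivity)
    refine ⟨M, fun m hm n hn y hy => ?_⟩
    rw [dist_eq_norm, ← fderiv_sub (hdat m y hy) (hdat n y hy)]
    have := ca_fderiv_bound (f := F m - F n) (c := y) (R := R/2) (C := ε * R / 8) (by positivity)
      (((hd' m).sub (hd' n)).mono (hsub y hy)) (fun z hz => by
        have := hM m hm n hn z (hsub y hy hz)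
        rw [dist_eq_norm] at this
        exact this.le)
    refine this.trans_lt ?_
    have : 2 * (ε * R / 8) / (R / 2) = ε / 2 := by field_simp; norm_num
    rw [this]; linarith
  have hptw : ∀ y ∈ ball c (R/2), ∃ l, Tendsto (fun n => fderiv ℂ (F n) y) atTop (𝓝 l) := by
    intro y hy
    exact cauchySeq_tendsto_of_complete (hC'.cauchySeq hy)
  choose! g' hg' using hptw
  have hu := hC'.tendstoUniformlyOn_of_tendsto hg'
  have := hasFDerivAt_of_tendstoUniformlyOn (x := c) isOpen_ball hu
    (fun n x hx => (hdat n x hx).hasFDerivAt)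
    (fun x hx => hlim'.tendsto_at (ball_subset_ball (by linarith) hx)) (mem_ball_self (by positivity))
  exact this.differentiableAt

lemma ca_tsum [CompleteSpace G] {f : ℕ → E → G} {c : E} {R : ℝ} {u : ℕ → ℝ} (hu : Summable u)
    (hd : ∀ n, DifferentiableOn ℂ (f n) (ball c R))
    (hb : ∀ n, ∀ z ∈ ball c R, ‖f n z‖ ≤ u n) :
    DifferentiableOn ℂ (fun z => ∑' n, f n z) (ball c R) := by
  intro y hy
  apply DifferentiableAt.differentiableWithinAt
  obtain ⟨ε, hε, hs⟩ := Metric.isOpen_iff.1 isOpen_ball y hy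
  have h := tendstoUniformlyOn_tsum_nat hu (s := ball y ε) (fun n x hx => hb n x (hs hx))
  refine ca_limit hε (Eventually.of_forall fun n => ?_) h
  have : DifferentiableOn ℂ (∑ i ∈ Finset.range n, f i) (ball y ε) :=
    DifferentiableOn.sum fun i _ => (hd i).mono hs
  convert this using 1
  ext x; simp

/-- A quadratic bound gives a Lipschitz bound. -/
lemma ca_quad {g : E → G} {r C : ℝ} (hd : DifferentiableOn ℂ g (ball 0 r))
    (hb : ∀ z ∈ ball (0:E) r, ‖g z‖ ≤ C * ‖z‖ ^ 2) (hC : 0 ≤ C) :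
    ∀ z ∈ ball (0:E) (r/2), ∀ w ∈ ball (0:E) (r/2),
      ‖g z - g w‖ ≤ 8 * C * max ‖z‖ ‖w‖ * ‖z - w‖ := by
  intro z hz w hw
  set ρ := max ‖z‖ ‖w‖ with hρ
  rw [mem_ball_zero_iff] at hz hw
  have hρr : ρ < r/2 := max_lt hz hw
  have hρ0 : 0 ≤ ρ := (norm_nonneg z).trans (le_max_left _ _)
  rcases hρ0.eq_or_lt with h0 | h0
  · have h1 : ‖z‖ ≤ 0 := h0 ▸ le_max_left ‖z‖ ‖w‖
    have h2 : ‖w‖ ≤ 0 := h0 ▸ le_max_right ‖z‖ ‖w‖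
    rw [norm_le_zero_iff] at h1 h2
    simp [h1, h2]
  have key : ∀ x ∈ closedBall (0:E) ρ, ‖fderiv ℂ g x‖ ≤ 8 * C * ρ := by
    intro x hx
    rw [mem_closedBall_zero_iff] at hx
    have hsub : ∀ y ∈ ball x ρ, ‖y‖ < 2 * ρ := by
      intro y hy
      rw [mem_ball, dist_eq_norm] at hy
      have := norm_sub_norm_le y x
      linarith
    have := ca_fderiv_bound (f := g) (c := x) (R := ρ) (C := C * (2 * ρ) ^ 2) h0
      (hd.mono fun y hy => by rw [mem_ball_zero_iff]; linarith [hsub y hy])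
      (fun y hy => (hb y (by rw [mem_ball_zero_iff]; linarith [hsub y hy])).trans
        (by have := (hsub y hy).le; gcongr))
    refine this.trans (le_of_eq ?_)
    field_simp; ring
  let _ : NormedSpace ℝ E := NormedSpace.restrictScalars ℝ ℂ E
  refine Convex.norm_image_sub_le_of_norm_fderiv_le (𝕜 := ℂ) (s := closedBall (0:E) ρ) ?_ key (convex_closedBall _ _)
    (by rw [mem_closedBall_zero_iff]; exact le_max_right _ _)
    (by rw [mem_closedBall_zero_iff]; exact le_max_left _ _)
  intro x hx
  rw [mem_closedBall_zero_iff] at hx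
  exact hd.differentiableAt (isOpen_ball.mem_nhds (by rw [mem_ball_zero_iff]; linarith))

/-- The remainder of the linear part is quadratic. -/
lemma ca_c11 {f : E → G} {L : E →L[ℂ] G} {r C : ℝ} (hr : 0 < r)
    (hd : DifferentiableOn ℂ f (ball 0 r))
    (h0 : f 0 = 0) (hL : HasFDerivAt f L 0) (hb : ∀ z ∈ ball (0:E) r, ‖f z‖ ≤ C) :
    ∀ z ∈ ball (0:E) r, ‖f z - L z‖ ≤ (3 * C / r^2) * ‖z‖ ^ 2 := by
  intro z hz
  have hLn : ‖L‖ ≤ 2 * C / r := by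
    rw [← hL.fderiv]; exact ca_fderiv_bound hr hd hb
  have h1 := Complex.dist_le_mul_div_pow_of_mapsTo_ball_of_isLittleO (f := fun z => f z - L z)
    (c := (0:E)) (z := z) (R₁ := r) (R₂ := 3 * C) (n := 1) ?_ ?_ ?_ hz
  · simp only [h0, map_zero, sub_zero, dist_zero_right] at h1
    refine h1.trans (le_of_eq ?_)
    rw [one_add_one_eq_two, div_pow]
    field_simp
  · exact hd.sub L.differentiable.differentiableOn
  · intro y hy
    have hy' := mem_ball_zero_iff.1 hy
    simp only [h0, map_zero, sub_zero, mem_closedBall_zero_iff]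
    have h2 := hb y hy
    have h3 : ‖L y‖ ≤ 2 * C := by
      have h4 : ‖L y‖ ≤ (2 * C / r) * r := (L.le_opNorm y).trans
        (mul_le_mul hLn hy'.le (norm_nonneg _) ((norm_nonneg _).trans hLn))
      rwa [div_mul_cancel₀ _ hr.ne'] at h4
    have := norm_sub_le (f y) (L y)
    linarith
  · have := hL.isLittleO
    simp only [h0, map_zero, sub_zero, pow_one] at this ⊢
    exact this.norm_right

/-- One dimensional homogeneous term. -/
lemma ca_one_dim {φ : ℂ → ℂ} {R A : ℝ} (hR : 0 < R) {m : ℕ}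
    (hd : DifferentiableOn ℂ φ (ball 0 R)) (hb : ∀ t ∈ ball (0:ℂ) R, ‖φ t‖ ≤ A * ‖t‖ ^ m)
    (hm : m ≠ 0) :
    ∃ c : ℂ, ∀ t ∈ ball (0:ℂ) R, ‖φ t - c * t ^ m‖ ≤ 2 * A / R * ‖t‖ ^ (m+1) := by
  have hA : ∀ t ∈ ball (0:ℂ) R \ {0}, ‖φ t / t ^ m‖ ≤ A := by
    intro t ht
    have : 0 < ‖t‖ := norm_pos_iff.2 ht.2
    rw [norm_div, norm_pow, div_le_iff₀ (by positivity)]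
    exact hb t ht.1
  have hdd : DifferentiableOn ℂ (fun t => φ t / t ^ m) (ball (0:ℂ) R \ {0}) := by
    refine (hd.mono Set.sdiff_subset).div (by fun_prop) ?_
    intro t ht
    exact pow_ne_zero _ ht.2
  have h1 := Complex.differentiableOn_update_limUnder_of_bddAbove (ball_mem_nhds (0:ℂ) hR) hdd
    ⟨A, by rintro _ ⟨t, ht, rfl⟩; exact hA t ht⟩
  set c := limUnder (𝓝[≠] (0:ℂ)) (fun t => φ t / t ^ m) with hc
  set ψ := Function.update (fun t => φ t / t ^ m) 0 c with hψ
  have hψ0 : ψ 0 = c := by simp [hψ]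
  have hψt : ∀ t, t ≠ 0 → ψ t = φ t / t ^ m := fun t ht => by simp [hψ, ht]
  have hcont : ContinuousAt ψ 0 := h1.continuousOn.continuousAt (ball_mem_nhds (0:ℂ) hR)
  have hcA : ‖c‖ ≤ A := by
    have ht : Tendsto (fun t => ‖ψ t‖) (𝓝[≠] (0:ℂ)) (𝓝 ‖c‖) := by
      have := hcont.norm.tendsto
      simp only [hψ0] at this
      exact this.mono_left nhdsWithin_le_nhds
    refine le_of_tendsto ht ?_
    rw [eventually_nhdsWithin_iff]
    filter_upwards [ball_mem_nhds (0:ℂ) hR] with t ht h0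
    rw [hψt t h0]; exact hA t ⟨ht, h0⟩
  refine ⟨c, fun t ht => ?_⟩
  rcases eq_or_ne t 0 with rfl | h0
  · have := hb 0 ht
    simp [hm] at this ⊢
    exact this
  have h2 := Complex.dist_le_div_mul_dist_of_mapsTo_ball (R₂ := 2 * A) h1 (z := t) ?_ ht
  · rw [hψ0, hψt t h0, dist_zero_right, dist_eq_norm] at h2
    have : φ t - c * t ^ m = (φ t / t ^ m - c) * t ^ m := by
      have := pow_ne_zero m h0
      field_simp
    rw [this, norm_mul, norm_pow, pow_succ, mul_comm (‖t‖ ^ m), ← mul_assoc]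
    gcongr
  · intro s hs
    change dist (ψ s) (ψ 0) ≤ _
    rw [hψ0, dist_eq_norm]
    have : ‖ψ s‖ ≤ A := by
      rcases eq_or_ne s 0 with rfl | hs0
      · rw [hψ0]; exact hcA
      · rw [hψt s hs0]; exact hA s ⟨hs, hs0⟩
    have := norm_sub_le (ψ s) c
    linarith

end CA



section CA2
variable {E : Type*} [NormedAddCommGroup E] [NormedSpace ℂ E]
  {G : Type*} [NormedAddCommGroup G] [NormedSpace ℂ G]

lemma ca_hom {g : E → ℂ} {r S : ℝ} (hr : 0 < r) (hS : 0 ≤ S) {m : ℕ} (hm : m ≠ 0)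
    (hd : DifferentiableOn ℂ g (ball 0 r)) (hb : ∀ z ∈ ball (0:E) r, ‖g z‖ ≤ S * ‖z‖ ^ m) :
    ∃ H : E → ℂ, Differentiable ℂ H ∧
      ∀ z ∈ ball (0:E) r, ‖g z - H z‖ ≤ (2 * S / r) * ‖z‖ ^ (m+1) := by
  have hex : ∀ z : E, ∃ c : ℂ, ∀ t : ℂ, ‖t • z‖ < r →
      ‖g (t • z) - c * t ^ m‖ ≤ (2 * S / r) * ‖t • z‖ ^ (m+1) := by
    intro z
    rcases eq_or_ne z 0 with rfl | hz
    · refine ⟨0, fun t ht => ?_⟩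
      have := hb 0 (mem_ball_self hr)
      simp [hm] at this ⊢
      exact this
    have hz' : 0 < ‖z‖ := norm_pos_iff.2 hz
    have hmem : ∀ t ∈ ball (0:ℂ) (r / ‖z‖), t • z ∈ ball (0:E) r := by
      intro t ht
      rw [mem_ball_zero_iff] at ht ⊢
      rw [norm_smul]
      rwa [lt_div_iff₀ hz'] at ht
    obtain ⟨c, hc⟩ := ca_one_dim (φ := fun t => g (t • z)) (R := r / ‖z‖) (A := S * ‖z‖ ^ m)
      (by positivity) (m := m)
      (hd.comp (by fun_prop) hmem)
      (fun t ht => by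
        have := hb _ (hmem t ht)
        rw [norm_smul, mul_pow] at this
        refine this.trans (le_of_eq (by ring))) hm
    refine ⟨c, fun t ht => ?_⟩
    have := hc t (by
      rw [mem_ball_zero_iff, lt_div_iff₀ hz', ← norm_smul]; exact ht)
    refine this.trans (le_of_eq ?_)
    rw [norm_smul]
    field_simp
    ring
  choose H hH using hex
  refine ⟨H, ?_, fun z hz => ?_⟩
  swap
  · have := hH z 1 (by simpa using hz)
    simpa using this
  intro c
  refine ca_limit (R := 1) (f := fun (N : ℕ) z => ((N:ℂ)+1) ^ m * g (((N:ℂ)+1)⁻¹ • z)) one_pos ?_ ?_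
  · obtain ⟨N₀, hN₀⟩ := exists_nat_gt ((‖c‖ + 1) / r)
    refine eventually_atTop.2 ⟨N₀, fun N hN => ?_⟩
    refine DifferentiableOn.const_mul ?_ _
    refine hd.comp (by fun_prop) ?_
    intro z hz
    rw [mem_ball, dist_eq_norm] at hz
    have h1 : ‖z‖ < ‖c‖ + 1 := by linarith [norm_sub_norm_le z c]
    have h2 : (N₀:ℝ) ≤ N := by exact_mod_cast hN
    have h3 : ‖((N:ℂ)+1)⁻¹‖ = ((N:ℝ)+1)⁻¹ := by
      rw [norm_inv]; congr 1; norm_cast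
    rw [mem_ball_zero_iff, norm_smul, h3, inv_mul_lt_iff₀ (by positivity)]
    rw [div_lt_iff₀ hr] at hN₀
    nlinarith
  · rw [Metric.tendstoUniformlyOn_iff]
    intro ε hε
    set K := (2 * S / r) * (‖c‖ + 1) ^ (m+1) with hK
    obtain ⟨N₀, hN₀⟩ := exists_nat_gt ((‖c‖ + 1) / r)
    obtain ⟨N₁, hN₁⟩ := exists_nat_gt (K / ε)
    refine eventually_atTop.2 ⟨max N₀ N₁, fun N hN z hz => ?_⟩
    rw [mem_ball, dist_eq_norm] at hz
    have h1 : ‖z‖ < ‖c‖ + 1 := by linarith [norm_sub_norm_le z c]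
    have h2 : (N₀:ℝ) ≤ N := by exact_mod_cast (le_max_left _ _).trans hN
    have h2' : (N₁:ℝ) ≤ N := by exact_mod_cast (le_max_right _ _).trans hN
    have hNn : ‖((N:ℂ)+1)‖ = ((N:ℝ)+1) := by norm_cast
    have h3 : ‖((N:ℂ)+1)⁻¹‖ = ((N:ℝ)+1)⁻¹ := by
      rw [norm_inv, hNn]
    have hN1 : (0:ℝ) < (N:ℝ) + 1 := by positivity
    have h4 := hH z (((N:ℂ)+1)⁻¹) (by
      rw [norm_smul, h3, inv_mul_lt_iff₀ (by positivity)]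
      rw [div_lt_iff₀ hr] at hN₀
      nlinarith)
    have hne : ((N:ℂ)+1) ≠ 0 := by rw [← norm_pos_iff, hNn]; exact hN1
    have h5 : H z - ((N:ℂ)+1) ^ m * g (((N:ℂ)+1)⁻¹ • z)
        = - (((N:ℂ)+1) ^ m * (g (((N:ℂ)+1)⁻¹ • z) - H z * (((N:ℂ)+1)⁻¹) ^ m)) := by
      rw [mul_sub, mul_left_comm, ← mul_pow, mul_inv_cancel₀ hne]; simp
    rw [dist_eq_norm, h5, norm_neg, norm_mul, norm_pow, hNn]
    rw [norm_smul, h3, mul_pow] at h4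
    calc ((N:ℝ)+1) ^ m * _ ≤ ((N:ℝ)+1) ^ m * ((2 * S / r) * ((((N:ℝ)+1)⁻¹) ^ (m+1) * ‖z‖ ^ (m+1))) := by
          gcongr
      _ = ((2 * S / r) * ‖z‖ ^ (m+1)) / ((N:ℝ)+1) := by
          rw [inv_pow, pow_succ ((N:ℝ)+1)]; field_simp
      _ ≤ K / ((N:ℝ)+1) := by rw [hK]; gcongr
      _ < ε := by
          rw [div_lt_iff₀ hN1]
          rw [div_lt_iff₀ hε] at hN₁
          nlinarith

lemma ca_trunc {r : ℝ} (hr : 0 < r) (C : ℝ) (hC : 0 ≤ C) (m : ℕ) :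
    ∃ C' : ℝ, 0 ≤ C' ∧ ∀ p : E → ℂ, DifferentiableOn ℂ p (ball 0 r) → p 0 = 0 →
      (∀ z ∈ ball (0:E) r, ‖p z‖ ≤ C) →
      ∃ q : E → ℂ, Differentiable ℂ q ∧ ∀ z ∈ ball (0:E) r, ‖p z - q z‖ ≤ C' * ‖z‖ ^ (m+1) := by
  induction m with
  | zero =>
    refine ⟨C / r, by positivity, fun p hd h0 hb => ⟨0, differentiable_const _, fun z hz => ?_⟩⟩
    have := Complex.dist_le_div_mul_dist_of_mapsTo_ball (R₂ := C) hd (z := z) ?_ hz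
    · simpa [h0] using this
    · intro y hy
      simpa [h0] using hb y hy
  | succ m ih =>
    obtain ⟨C', hC', h⟩ := ih
    refine ⟨2 * C' / r, by positivity, fun p hd h0 hb => ?_⟩
    obtain ⟨q, hq, hpq⟩ := h p hd h0 hb
    obtain ⟨H, hH, hH'⟩ := ca_hom (g := fun z => p z - q z) hr hC' (Nat.succ_ne_zero m)
      (hd.sub hq.differentiableOn) hpq
    refine ⟨fun z => q z + H z, hq.add hH, fun z hz => ?_⟩
    have := hH' z hz
    rw [sub_sub] at this
    exact this

lemma ca_hasFDerivAt_of_quad {g : E → G} {L : E →L[ℂ] G} {r C : ℝ} (hr : 0 < r) (h0 : g 0 = 0)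
    (hb : ∀ z ∈ ball (0:E) r, ‖g z - L z‖ ≤ C * ‖z‖ ^ 2) : HasFDerivAt g L 0 := by
  rw [hasFDerivAt_iff_isLittleO_nhds_zero]
  simp only [zero_add, h0, sub_zero]
  have h1 : (fun z => g z - L z) =O[𝓝 0] fun z : E => ‖z‖ ^ 2 := by
    refine Asymptotics.IsBigO.of_bound C ?_
    filter_upwards [ball_mem_nhds (0:E) hr] with z hz
    simpa using hb z hz
  refine h1.trans_isLittleO ?_
  have := (Asymptotics.isLittleO_norm_pow_id (E' := E) (n := 2) (by norm_num))
  exact this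

lemma ca_inv [CompleteSpace E] {w : E → E} {r : ℝ} (h0 : w 0 = 0)
    (hd : DifferentiableOn ℂ w (ball 0 r))
    (hl : ∀ x ∈ ball (0:E) r, ∀ y ∈ ball (0:E) r, ‖w x - w y‖ ≤ 1/2 * ‖x - y‖) :
    ∃ k : E → E, DifferentiableOn ℂ k (ball 0 (r/2)) ∧
      (∀ z ∈ ball (0:E) (r/2), ‖k z‖ ≤ 2 * ‖z‖ ∧ k z + w (k z) = z) ∧
      (∀ x ∈ ball (0:E) r, x + w x ∈ ball (0:E) (r/2) → k (x + w x) = x) := by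
  let K : ℕ → E → E := fun n => Nat.rec (fun _ => 0) (fun _ f z => z - w (f z)) n
  have hK0 : ∀ z, K 0 z = 0 := fun z => rfl
  have hKs : ∀ n z, K (n+1) z = z - w (K n z) := fun n z => rfl
  have hKb : ∀ n, ∀ z ∈ ball (0:E) (r/2), ‖K n z‖ ≤ 2 * ‖z‖ := by
    intro n z hz
    rw [mem_ball_zero_iff] at hz
    have hr : 0 < r := by linarith [norm_nonneg z]
    induction n with
    | zero => rw [hK0]; simp
    | succ n ih =>
      rw [hKs]
      have h1 := hl (K n z) (by rw [mem_ball_zero_iff]; linarith) 0 (mem_ball_self hr)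
      rw [h0, sub_zero, sub_zero] at h1
      have := norm_sub_le z (w (K n z))
      linarith
  have hKm : ∀ n, ∀ z ∈ ball (0:E) (r/2), K n z ∈ ball (0:E) r := by
    intro n z hz
    have := hKb n z hz
    rw [mem_ball_zero_iff] at hz ⊢
    linarith
  have hKd : ∀ n, DifferentiableOn ℂ (K n) (ball 0 (r/2)) := by
    intro n
    induction n with
    | zero => exact differentiableOn_const _
    | succ n ih =>
      have : K (n+1) = fun z => z - w (K n z) := rfl
      rw [this]
      exact differentiableOn_id.sub (hd.comp ih (hKm n))
  have hKg : ∀ z ∈ ball (0:E) (r/2), ∀ n, dist (K n z) (K (n+1) z) ≤ r / 2 * (1/2) ^ n := by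
    intro z hz n
    induction n with
    | zero =>
      rw [hKs, hK0, h0, mem_ball_zero_iff] at *
      simpa using hz.le
    | succ n ih =>
      rw [hKs, hKs (n+1), dist_eq_norm]
      have h1 := hl _ (hKm (n+1) z hz) _ (hKm n z hz)
      rw [dist_comm, dist_eq_norm] at ih
      rw [sub_sub_sub_cancel_left, pow_succ]
      linarith
  have hlim : ∀ z ∈ ball (0:E) (r/2), ∃ l, Tendsto (fun n => K n z) atTop (𝓝 l) := fun z hz =>
    cauchySeq_tendsto_of_complete (cauchySeq_of_le_geometric _ _ (by norm_num) (hKg z hz))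
  choose! k hk using hlim
  have hkb : ∀ z ∈ ball (0:E) (r/2), ‖k z‖ ≤ 2 * ‖z‖ := fun z hz =>
    le_of_tendsto (hk z hz).norm (Eventually.of_forall fun n => hKb n z hz)
  have hkm : ∀ z ∈ ball (0:E) (r/2), k z ∈ ball (0:E) r := by
    intro z hz
    have := hkb z hz
    rw [mem_ball_zero_iff] at hz ⊢
    linarith
  have hkeq : ∀ z ∈ ball (0:E) (r/2), k z + w (k z) = z := by
    intro z hz
    have h1 : Tendsto (fun n => K (n+1) z) atTop (𝓝 (k z)) := (tendsto_add_atTop_iff_nat 1).2 (hk z hz)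
    have h2 : Tendsto (fun n => K (n+1) z) atTop (𝓝 (z - w (k z))) := by
      simp only [hKs]
      refine tendsto_const_nhds.sub ?_
      exact ((hd.continuousOn.continuousAt (isOpen_ball.mem_nhds (hkm z hz))).tendsto).comp (hk z hz)
    rw [tendsto_nhds_unique h1 h2]
    rw [← tendsto_nhds_unique h1 h2]; 
    nth_rewrite 1 [tendsto_nhds_unique h1 h2]
    abel
  refine ⟨k, ?_, fun z hz => ⟨hkb z hz, hkeq z hz⟩, ?_⟩
  · have hu : TendstoUniformlyOn K k atTop (ball 0 (r/2)) := by
      rw [Metric.tendstoUniformlyOn_iff]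
      intro ε hε
      have : Tendsto (fun n : ℕ => r / 2 * (1/2:ℝ) ^ n / (1 - 1/2)) atTop (𝓝 (r/2 * 0 / (1 - 1/2))) :=
        ((tendsto_pow_atTop_nhds_zero_of_lt_one (by norm_num) (by norm_num)).const_mul _).div_const _
      have h2 := this.eventually_lt_const (u := ε) (by simpa using hε)
      filter_upwards [h2] with n hn z hz
      rw [dist_comm]
      exact (dist_le_of_le_geometric_of_tendsto _ _ (by norm_num) (hKg z hz) (hk z hz) n).trans_lt hn
    intro z hz
    obtain ⟨ε, hε, hs⟩ := Metric.isOpen_iff.1 isOpen_ball z hz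
    exact (ca_limit hε (Eventually.of_forall fun n => (hKd n).mono hs)
      (hu.mono hs)).differentiableWithinAt
  · intro x hx hxr
    have h1 := hkeq _ hxr
    have h2 := hl _ (hkm _ hxr) _ hx
    set y := k (x + w x)
    have h3 : y - x = -(w y - w x) := by
      have : y = x + w x - w y := by rw [eq_sub_iff_add_eq]; exact h1
      nth_rewrite 1 [this]; abel
    rw [← norm_neg, ← h3] at h2
    have : ‖y - x‖ ≤ 0 := by linarith
    rwa [norm_le_zero_iff, sub_eq_zero] at this

end CA2

/-! ### The linear cohomological equation -/
section Coh

def cohTerm {X : Type*} (lam : ℕ → ℂ) (φ : ℕ → X → ℂ) (F : ℕ → X → X) : ℕ → ℕ → X → ℂ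
  | 0, n, x => φ n x / lam n
  | j + 1, n, x => cohTerm lam φ F j (n + 1) (F n x) / lam n

def cohSum {X : Type*} (lam : ℕ → ℂ) (φ : ℕ → X → ℂ) (F : ℕ → X → X) (n : ℕ) (x : X) : ℂ :=
  ∑' j, cohTerm lam φ F j n x

variable {X : Type*} {lam : ℕ → ℂ} {φ : ℕ → X → ℂ} {F : ℕ → X → X} {D : Set X} {W : X → ℝ}
  {a C θ : ℝ}

lemma coh_bound (ha : 0 < a) (hlam : ∀ n, a ≤ ‖lam n‖) (hmaps : ∀ n, Set.MapsTo (F n) D D)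
    (hθ0 : 0 ≤ θ) (hC : 0 ≤ C) (hW0 : ∀ x ∈ D, 0 ≤ W x)
    (hW : ∀ n, ∀ x ∈ D, W (F n x) ≤ θ * ‖lam n‖ * W x)
    (hφ : ∀ n, ∀ x ∈ D, ‖φ n x‖ ≤ C * W x) (j : ℕ) :
    ∀ n, ∀ x ∈ D, ‖cohTerm lam φ F j n x‖ ≤ C / a * W x * θ ^ j := by
  induction j with
  | zero =>
    intro n x hx
    rw [cohTerm, norm_div, pow_zero, mul_one, div_mul_eq_mul_div]
    have := hW0 x hx
    exact div_le_div₀ (by positivity) (hφ n x hx) ha (hlam n)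
  | succ j ih =>
    intro n x hx
    have hl : 0 < ‖lam n‖ := ha.trans_le (hlam n)
    rw [cohTerm, norm_div, div_le_iff₀ hl]
    refine (ih (n+1) _ (hmaps n hx)).trans ?_
    calc C / a * W (F n x) * θ ^ j ≤ C / a * (θ * ‖lam n‖ * W x) * θ ^ j := by
          gcongr; exact hW n x hx
      _ = _ := by ring

lemma coh_hasSum (ha : 0 < a) (hlam : ∀ n, a ≤ ‖lam n‖) (hmaps : ∀ n, Set.MapsTo (F n) D D)
    (hθ0 : 0 ≤ θ) (hθ1 : θ < 1) (hC : 0 ≤ C) (hW0 : ∀ x ∈ D, 0 ≤ W x)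
    (hW : ∀ n, ∀ x ∈ D, W (F n x) ≤ θ * ‖lam n‖ * W x)
    (hφ : ∀ n, ∀ x ∈ D, ‖φ n x‖ ≤ C * W x) :
    ∀ n, ∀ x ∈ D, HasSum (fun j => cohTerm lam φ F j n x) (cohSum lam φ F n x) := by
  intro n x hx
  refine Summable.hasSum (Summable.of_norm_bounded (g := fun j => C / a * W x * θ ^ j) ?_
    (fun j => coh_bound ha hlam hmaps hθ0 hC hW0 hW hφ j n x hx))
  exact (summable_geometric_of_lt_one hθ0 hθ1).mul_left _

lemma coh_sum_bound (ha : 0 < a) (hlam : ∀ n, a ≤ ‖lam n‖) (hmaps : ∀ n, Set.MapsTo (F n) D D)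
    (hθ0 : 0 ≤ θ) (hθ1 : θ < 1) (hC : 0 ≤ C) (hW0 : ∀ x ∈ D, 0 ≤ W x)
    (hW : ∀ n, ∀ x ∈ D, W (F n x) ≤ θ * ‖lam n‖ * W x)
    (hφ : ∀ n, ∀ x ∈ D, ‖φ n x‖ ≤ C * W x) :
    ∀ n, ∀ x ∈ D, ‖cohSum lam φ F n x‖ ≤ (C / a * (1 - θ)⁻¹) * W x := by
  intro n x hx
  have h := tsum_of_norm_bounded ((hasSum_geometric_of_lt_one hθ0 hθ1).mul_left (C / a * W x))
    (fun j => coh_bound ha hlam hmaps hθ0 hC hW0 hW hφ j n x hx)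
  refine h.trans (le_of_eq (by ring))

lemma coh_eq (ha : 0 < a) (hlam : ∀ n, a ≤ ‖lam n‖) (hmaps : ∀ n, Set.MapsTo (F n) D D)
    (hθ0 : 0 ≤ θ) (hθ1 : θ < 1) (hC : 0 ≤ C) (hW0 : ∀ x ∈ D, 0 ≤ W x)
    (hW : ∀ n, ∀ x ∈ D, W (F n x) ≤ θ * ‖lam n‖ * W x)
    (hφ : ∀ n, ∀ x ∈ D, ‖φ n x‖ ≤ C * W x) :
    ∀ n, ∀ x ∈ D, lam n * cohSum lam φ F n x = φ n x + cohSum lam φ F (n+1) (F n x) := by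
  intro n x hx
  have h0 : lam n ≠ 0 := norm_pos_iff.1 (ha.trans_le (hlam n))
  have hs := coh_hasSum ha hlam hmaps hθ0 hθ1 hC hW0 hW hφ
  have h1 := (hs n x hx).summable.tsum_eq_zero_add
  have h2 : cohSum lam φ F n x = φ n x / lam n + cohSum lam φ F (n+1) (F n x) / lam n := by
    rw [cohSum, h1]
    congr 1
    rw [cohSum, ← tsum_div_const]
    rfl
  rw [h2]; field_simp

lemma coh_diff {X : Type*} [NormedAddCommGroup X] [NormedSpace ℂ X]
    {lam : ℕ → ℂ} {φ : ℕ → X → ℂ} {F : ℕ → X → X} {D : Set X} {W : X → ℝ}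
    {a C θ K r : ℝ} (ha : 0 < a) (hlam : ∀ n, a ≤ ‖lam n‖) (hmaps : ∀ n, Set.MapsTo (F n) D D)
    (hθ0 : 0 ≤ θ) (hθ1 : θ < 1) (hC : 0 ≤ C) (hW0 : ∀ x ∈ D, 0 ≤ W x)
    (hW : ∀ n, ∀ x ∈ D, W (F n x) ≤ θ * ‖lam n‖ * W x)
    (hφ : ∀ n, ∀ x ∈ D, ‖φ n x‖ ≤ C * W x)
    (hF : ∀ n, DifferentiableOn ℂ (F n) D) (hφd : ∀ n, DifferentiableOn ℂ (φ n) D)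
    (hK : ∀ x ∈ D, W x ≤ K)
    {E : Type*} [NormedAddCommGroup E] [NormedSpace ℂ E] {ι : E → X}
    (hι : DifferentiableOn ℂ ι (ball 0 r)) (hιm : Set.MapsTo ι (ball 0 r) D) (n : ℕ) :
    DifferentiableOn ℂ (fun z => cohSum lam φ F n (ι z)) (ball 0 r) := by
  have ht : ∀ j n, DifferentiableOn ℂ (cohTerm lam φ F j n) D := by
    intro j
    induction j with
    | zero => 
      intro n
      have : cohTerm lam φ F 0 n = fun x => φ n x / lam n := rfl
      rw [this]
      simp only [div_eq_mul_inv]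
      exact (hφd n).mul_const _
    | succ j ih =>
      intro n
      have : cohTerm lam φ F (j+1) n = fun x => cohTerm lam φ F j (n+1) (F n x) / lam n := rfl
      rw [this]
      simp only [div_eq_mul_inv]
      exact ((ih (n+1)).comp (hF n) (hmaps n)).mul_const _
  refine ca_tsum (u := fun j => C / a * K * θ ^ j)
    ((summable_geometric_of_lt_one hθ0 hθ1).mul_left _) (fun j => (ht j n).comp hι hιm) ?_
  intro j z hz
  refine (coh_bound ha hlam hmaps hθ0 hC hW0 hW hφ j n _ (hιm hz)).trans ?_
  have := hK _ (hιm hz)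
  gcongr

end Coh



section Core

def coProj {k : ℕ} (i : Fin k) (z : Fin k → ℂ) : Fin k → ℂ := fun j => if j < i then z j else 0

lemma coProj_lt {k : ℕ} {i j : Fin k} (h : j < i) (z : Fin k → ℂ) : coProj i z j = z j := by
  simp [coProj, h]

lemma coProj_ge {k : ℕ} {i j : Fin k} (h : ¬ j < i) (z : Fin k → ℂ) : coProj i z j = 0 := by
  simp [coProj, h]

lemma coProj_norm_le {k : ℕ} (i : Fin k) (z : Fin k → ℂ) : ‖coProj i z‖ ≤ ‖z‖ := by
  rw [pi_norm_le_iff_of_nonneg (norm_nonneg z)]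
  intro j
  by_cases h : j < i
  · rw [coProj_lt h]; exact norm_le_pi_norm z j
  · rw [coProj_ge h]; simp

lemma coProj_sub_norm_le {k : ℕ} (i : Fin k) (z : Fin k → ℂ) : ‖z - coProj i z‖ ≤ ‖z‖ := by
  rw [pi_norm_le_iff_of_nonneg (norm_nonneg z)]
  intro j
  rw [Pi.sub_apply]
  by_cases h : j < i
  · rw [coProj_lt h]; simp
  · rw [coProj_ge h]; simpa using norm_le_pi_norm z j

lemma coProj_diff {k : ℕ} (i : Fin k) : Differentiable ℂ (coProj (k := k) i) := by
  rw [differentiable_pi]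
  intro j
  by_cases h : j < i
  · simp only [coProj_lt h]; fun_prop
  · simp only [coProj_ge h]; fun_prop

lemma coProj_mem {k : ℕ} (i : Fin k) {z : Fin k → ℂ} {r : ℝ} (hz : z ∈ ball (0 : Fin k → ℂ) r) :
    coProj i z ∈ ball (0 : Fin k → ℂ) r := by
  rw [mem_ball_zero_iff] at *
  exact (coProj_norm_le i z).trans_lt hz

lemma coProj_congr {k : ℕ} {i : Fin k} {z w : Fin k → ℂ} (h : ∀ l < i, z l = w l) :
    coProj i z = coProj i w := by
  ext j
  by_cases hj : j < i
  · rw [coProj_lt hj, coProj_lt hj, h j hj]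
  · rw [coProj_ge hj, coProj_ge hj]

lemma coProj_idem {k : ℕ} (i : Fin k) (z : Fin k → ℂ) : coProj i (coProj i z) = coProj i z :=
  coProj_congr fun _ hl => coProj_lt hl z

set_option maxHeartbeats 1000000 in
lemma step_core {k : ℕ} (i : Fin k) (f : ℕ → (Fin k → ℂ) → (Fin k → ℂ)) (lam : ℕ → ℂ)
    {r a θ C : ℝ} {M N : ℕ → ℝ} (hr : 0 < r) (hr1 : r ≤ 1) (ha : 0 < a) (hθ0 : 0 ≤ θ) (hθ1 : θ < 1)
    (hC : 0 ≤ C)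
    (hd : ∀ n, DifferentiableOn ℂ (f n) (ball 0 r))
    (hM0 : ∀ n, 0 ≤ M n) (hMθ : ∀ n, M n ≤ θ)
    (hM : ∀ n, ∀ z ∈ ball (0 : Fin k → ℂ) r, ‖f n z‖ ≤ M n * ‖z‖)
    (hagree : ∀ n, ∀ z ∈ ball (0 : Fin k → ℂ) r, ∀ w ∈ ball (0 : Fin k → ℂ) r,
      (∀ l < i, z l = w l) → ∀ l < i, f n z l = f n w l)
    (hN : ∀ n, ∀ z ∈ ball (0 : Fin k → ℂ) r, ∀ w ∈ ball (0 : Fin k → ℂ) r,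
      (∀ l < i, z l = w l) → ‖f n z - f n w‖ ≤ N n * ‖z - w‖)
    (hMN : ∀ n, M n * N n ≤ θ * ‖lam n‖) (hlam : ∀ n, a ≤ ‖lam n‖)
    (hquad : ∀ n, ∀ z ∈ ball (0 : Fin k → ℂ) r, ∀ w ∈ ball (0 : Fin k → ℂ) r,
      (∀ l < i, z l = w l) → ‖(f n z i - lam n * z i) - (f n w i - lam n * w i)‖
        ≤ C * (max ‖z‖ ‖w‖ * ‖z - w‖)) :
    ∃ (w : ℕ → (Fin k → ℂ) → ℂ) (q : ℕ → (Fin k → ℂ) → ℂ) (C' : ℝ), 0 ≤ C' ∧ ∀ n,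
      DifferentiableOn ℂ (w n) (ball 0 r) ∧
      (∀ z ∈ ball (0 : Fin k → ℂ) r, ‖w n z‖ ≤ C' * ‖z‖ ^ 2) ∧ Differentiable ℂ (q n) ∧
      ∀ z ∈ ball (0 : Fin k → ℂ) r,
        f n z i + w (n+1) (f n z) = lam n * (z i + w n z) + q n (coProj i z) := by
  have hfm : ∀ n, Set.MapsTo (f n) (ball 0 r) (ball 0 r) := by
    intro n z hz
    have h1 := hM n z hz
    rw [mem_ball_zero_iff] at *
    have : M n * ‖z‖ ≤ 1 * ‖z‖ := by gcongr; linarith [hMθ n]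
    linarith
  have hf0 : ∀ n, f n 0 = 0 := by
    intro n
    have := hM n 0 (mem_ball_self hr)
    simpa using this
  -- Step 1
  let X := (Fin k → ℂ) × (Fin k → ℂ)
  let D : Set X := {x | x.1 ∈ ball (0 : Fin k → ℂ) r ∧ x.2 ∈ ball (0 : Fin k → ℂ) r ∧ ∀ l < i, x.1 l = x.2 l}
  let FF : ℕ → X → X := fun n x => (f n x.1, f n x.2)
  let φ : ℕ → X → ℂ := fun n x => (f n x.1 i - lam n * x.1 i) - (f n x.2 i - lam n * x.2 i)
  let W : X → ℝ := fun x => max ‖x.1‖ ‖x.2‖ * ‖x.1 - x.2‖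
  have hmaps : ∀ n, Set.MapsTo (FF n) D D := fun n x hx =>
    ⟨hfm n hx.1, hfm n hx.2.1, hagree n _ hx.1 _ hx.2.1 hx.2.2⟩
  have hW0 : ∀ x ∈ D, 0 ≤ W x := fun x _ => by positivity
  have hW : ∀ n, ∀ x ∈ D, W (FF n x) ≤ θ * ‖lam n‖ * W x := by
    intro n x hx
    have h1 : max ‖f n x.1‖ ‖f n x.2‖ ≤ M n * max ‖x.1‖ ‖x.2‖ := by
      apply max_le
      · exact (hM n _ hx.1).trans (mul_le_mul_of_nonneg_left (le_max_left _ _) (hM0 n))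
      · exact (hM n _ hx.2.1).trans (mul_le_mul_of_nonneg_left (le_max_right _ _) (hM0 n))
    have h2 := hN n _ hx.1 _ hx.2.1 hx.2.2
    calc W (FF n x) ≤ (M n * max ‖x.1‖ ‖x.2‖) * (N n * ‖x.1 - x.2‖) :=
          mul_le_mul h1 h2 (norm_nonneg _) (mul_nonneg (hM0 n) (by positivity))
      _ = (M n * N n) * W x := by simp only [W]; ring
      _ ≤ _ := mul_le_mul_of_nonneg_right (hMN n) (hW0 x hx)
  have hφ : ∀ n, ∀ x ∈ D, ‖φ n x‖ ≤ C * W x := fun n x hx => hquad n _ hx.1 _ hx.2.1 hx.2.2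
  have hfst : Set.MapsTo (Prod.fst : X → Fin k → ℂ) D (ball 0 r) := fun x hx => hx.1
  have hsnd : Set.MapsTo (Prod.snd : X → Fin k → ℂ) D (ball 0 r) := fun x hx => hx.2.1
  have hd1 : ∀ n, DifferentiableOn ℂ (fun x : X => f n x.1) D := fun n =>
    (hd n).comp differentiable_fst.differentiableOn hfst
  have hd2 : ∀ n, DifferentiableOn ℂ (fun x : X => f n x.2) D := fun n =>
    (hd n).comp differentiable_snd.differentiableOn hsnd
  have hFd : ∀ n, DifferentiableOn ℂ (FF n) D := fun n => (hd1 n).prodMk (hd2 n)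
  have hev : Differentiable ℂ (fun z : Fin k → ℂ => z i) := by fun_prop
  have hφd : ∀ n, DifferentiableOn ℂ (φ n) D := by
    intro n
    have e1 : DifferentiableOn ℂ (fun x : X => f n x.1 i) D := hev.comp_differentiableOn (hd1 n)
    have e2 : DifferentiableOn ℂ (fun x : X => f n x.2 i) D := hev.comp_differentiableOn (hd2 n)
    have e3 : Differentiable ℂ (fun x : X => lam n * x.1 i) :=
      (hev.comp differentiable_fst).const_mul _
    have e4 : Differentiable ℂ (fun x : X => lam n * x.2 i) :=
      (hev.comp differentiable_snd).const_mul _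
    exact (e1.sub e3.differentiableOn).sub (e2.sub e4.differentiableOn)
  have hK : ∀ x ∈ D, W x ≤ 2 := by
    intro x hx
    have h1 := mem_ball_zero_iff.1 hx.1
    have h2 := mem_ball_zero_iff.1 hx.2.1
    have h3 : max ‖x.1‖ ‖x.2‖ ≤ 1 := max_le (by linarith) (by linarith)
    have h4 : ‖x.1 - x.2‖ ≤ 2 := (norm_sub_le _ _).trans (by linarith)
    calc W x ≤ 1 * 2 := mul_le_mul h3 h4 (norm_nonneg _) zero_le_one
      _ = 2 := by norm_num
  set S := cohSum lam φ FF with hS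
  have hSsum := coh_hasSum ha hlam hmaps hθ0 hθ1 hC hW0 hW hφ
  have hSb := coh_sum_bound ha hlam hmaps hθ0 hθ1 hC hW0 hW hφ
  have hSeq := coh_eq ha hlam hmaps hθ0 hθ1 hC hW0 hW hφ
  rw [← hS] at hSb hSeq
  set K1 := C / a * (1 - θ)⁻¹ with hK1
  have h1θ : 0 < 1 - θ := by linarith
  have hK1' : 0 ≤ K1 := by positivity
  let ι : (Fin k → ℂ) → X := fun z => (z, coProj i z)
  have hιD : Set.MapsTo ι (ball 0 r) D := fun z hz =>
    ⟨hz, coProj_mem i hz, fun l hl => (coProj_lt hl z).symm⟩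
  have hιd : Differentiable ℂ ι := differentiable_id.prodMk (coProj_diff i)
  let u : ℕ → (Fin k → ℂ) → ℂ := fun n z => S n (ι z)
  have hud : ∀ n, DifferentiableOn ℂ (u n) (ball 0 r) := fun n =>
    coh_diff ha hlam hmaps hθ0 hθ1 hC hW0 hW hφ hFd hφd hK hιd.differentiableOn hιD n
  have hub : ∀ n, ∀ z ∈ ball (0 : Fin k → ℂ) r, ‖u n z‖ ≤ K1 * ‖z‖ ^ 2 := by
    intro n z hz
    refine (hSb n _ (hιD hz)).trans ?_
    have h1 : max ‖z‖ ‖coProj i z‖ ≤ ‖z‖ := max_le le_rfl (coProj_norm_le i z)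
    have h2 := coProj_sub_norm_le i z
    have : W (ι z) ≤ ‖z‖ ^ 2 := by
      rw [sq]
      exact mul_le_mul h1 h2 (norm_nonneg _) (norm_nonneg _)
    gcongr
  -- cocycle
  have hcoc : ∀ n, ∀ x y z : Fin k → ℂ, (x, y) ∈ D → (y, z) ∈ D → (x, z) ∈ D →
      S n (x, y) + S n (y, z) = S n (x, z) := by
    intro n x y z h1 h2 h3
    have hterm : ∀ j n (x y z : Fin k → ℂ), cohTerm lam φ FF j n (x, y) + cohTerm lam φ FF j n (y, z)
        = cohTerm lam φ FF j n (x, z) := by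
      intro j
      induction j with
      | zero => intro n x y z; simp only [cohTerm, φ]; ring
      | succ j ih =>
        intro n x y z
        simp only [cohTerm, FF]
        rw [← add_div, ih]
    have := (hSsum n _ h1).add (hSsum n _ h2)
    simp only [hterm] at this
    exact this.unique (hSsum n _ h3)
  have hueq : ∀ n, ∀ z ∈ ball (0 : Fin k → ℂ) r, f n z i + u (n+1) (f n z) =
      lam n * (z i + u n z) + (f n (coProj i z) i + u (n+1) (f n (coProj i z))) := by
    intro n z hz
    have h1 := hSeq n _ (hιD hz)
    have hz' := coProj_mem i hz
    have hPP : coProj i (f n z) = coProj i (f n (coProj i z)) :=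
      coProj_congr (hagree n _ hz _ hz' fun l hl => (coProj_lt hl z).symm)
    have h2 := hcoc (n+1) (f n z) (f n (coProj i z)) (coProj i (f n z)) (hmaps n (hιD hz))
      (by rw [hPP]; exact hιD (hfm n hz')) (hιD (hfm n hz))
    have h3 : u (n+1) (f n (coProj i z)) = S (n+1) (f n (coProj i z), coProj i (f n z)) := by
      rw [hPP]
    have h4 : u (n+1) (f n z) = S (n+1) (f n z, coProj i (f n z)) := rfl
    have h5 : FF n (ι z) = (f n z, f n (coProj i z)) := rfl
    have h6 : φ n (ι z) = (f n z i - lam n * z i) - (f n (coProj i z) i - lam n * coProj i z i) := rfl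
    have h7 : coProj i z i = 0 := coProj_ge (lt_irrefl i) z
    rw [h5, h6, h7] at h1
    have h8 : u n z = S n (ι z) := rfl
    rw [h3, h4, h8, mul_add, h1, ← h2]
    ring
  -- Step 2
  let p : ℕ → (Fin k → ℂ) → ℂ := fun n z => f n (coProj i z) i + u (n+1) (f n (coProj i z))
  have hPd : ∀ n, DifferentiableOn ℂ (fun z => f n (coProj i z)) (ball 0 r) := fun n =>
    (hd n).comp (coProj_diff i).differentiableOn (fun z hz => coProj_mem i hz)
  have hPm : ∀ n, Set.MapsTo (fun z => f n (coProj i z)) (ball 0 r) (ball 0 r) := fun n z hz =>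
    hfm n (coProj_mem i hz)
  have hpd : ∀ n, DifferentiableOn ℂ (p n) (ball 0 r) := fun n =>
    (hev.comp_differentiableOn (hPd n)).add ((hud (n+1)).comp (hPd n) (hPm n))
  have hpb : ∀ n, ∀ z ∈ ball (0 : Fin k → ℂ) r, ‖p n z‖ ≤ 1 + K1 := by
    intro n z hz
    have h0 := hPm n hz
    have h1 := mem_ball_zero_iff.1 h0
    have h2 := hub (n+1) _ h0
    have h3 : ‖f n (coProj i z) i‖ ≤ ‖f n (coProj i z)‖ := norm_le_pi_norm _ i
    have h4 : ‖f n (coProj i z)‖ ≤ 1 := by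
      simp only at h1
      linarith
    refine (norm_add_le _ _).trans (add_le_add (h3.trans h4) (h2.trans ?_))
    have : ‖f n (coProj i z)‖ ^ 2 ≤ 1 := pow_le_one₀ (norm_nonneg _) h4
    calc _ ≤ K1 * 1 := by gcongr
      _ = K1 := mul_one _
  have hP0 : coProj i (0 : Fin k → ℂ) = 0 := by
    have := coProj_norm_le i (0 : Fin k → ℂ)
    simpa using this
  have hu0 : ∀ n, u n 0 = 0 := by
    intro n
    have := hub n 0 (mem_ball_self hr)
    simpa using this
  have hp0 : ∀ n, p n 0 = 0 := by
    intro n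
    simp only [p, hP0, hf0, hu0]; simp
  obtain ⟨m, hm⟩ := exists_pow_lt_of_lt_one ha hθ1
  obtain ⟨C₂, hC₂, htr⟩ := ca_trunc (E := Fin k → ℂ) hr (1 + K1) (by positivity) (m+1)
  choose q hqd hqb using fun n => htr (p n) (hpd n) (hp0 n) (hpb n)
  let φ2 : ℕ → (Fin k → ℂ) → ℂ := fun n z => p n (coProj i z) - q n (coProj i z)
  let W2 : (Fin k → ℂ) → ℝ := fun z => ‖z‖ ^ (m + 2)
  have hW20 : ∀ x ∈ ball (0 : Fin k → ℂ) r, 0 ≤ W2 x := fun x _ => by positivity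
  have hW2 : ∀ n, ∀ x ∈ ball (0 : Fin k → ℂ) r, W2 (f n x) ≤ θ * ‖lam n‖ * W2 x := by
    intro n x hx
    have h1 : ‖f n x‖ ≤ θ * ‖x‖ := (hM n x hx).trans (by gcongr; exact hMθ n)
    have h2 : θ ^ (m+2) ≤ θ * ‖lam n‖ := by
      have h3 : θ ^ (m+1) ≤ θ ^ m := pow_le_pow_of_le_one hθ0 hθ1.le (by omega)
      calc θ ^ (m+2) = θ * θ ^ (m+1) := by ring
        _ ≤ θ * ‖lam n‖ := by gcongr; linarith [hlam n]
    calc W2 (f n x) ≤ (θ * ‖x‖) ^ (m+2) := by simp only [W2]; gcongr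
      _ = θ ^ (m+2) * W2 x := by rw [mul_pow]
      _ ≤ _ := mul_le_mul_of_nonneg_right h2 (hW20 x hx)
  have hφ2 : ∀ n, ∀ x ∈ ball (0 : Fin k → ℂ) r, ‖φ2 n x‖ ≤ C₂ * W2 x := by
    intro n x hx
    refine (hqb n _ (coProj_mem i hx)).trans ?_
    have := coProj_norm_le i x
    simp only [W2]
    gcongr
  have hφ2d : ∀ n, DifferentiableOn ℂ (φ2 n) (ball 0 r) := fun n =>
    ((hpd n).comp (coProj_diff i).differentiableOn (fun z hz => coProj_mem i hz)).sub
      ((hqd n).comp (coProj_diff i)).differentiableOn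
  have hK2 : ∀ x ∈ ball (0 : Fin k → ℂ) r, W2 x ≤ ‖x‖ ^ 2 := by
    intro x hx
    rw [mem_ball_zero_iff] at hx
    exact pow_le_pow_of_le_one (norm_nonneg _) (by linarith) (by omega)
  have hK2' : ∀ x ∈ ball (0 : Fin k → ℂ) r, W2 x ≤ 1 := by
    intro x hx
    rw [mem_ball_zero_iff] at hx
    exact pow_le_one₀ (norm_nonneg _) (by linarith)
  set V := cohSum lam φ2 f with hV
  have hVb := coh_sum_bound ha hlam hfm hθ0 hθ1 hC₂ hW20 hW2 hφ2
  have hVeq := coh_eq ha hlam hfm hθ0 hθ1 hC₂ hW20 hW2 hφ2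
  have hVd : ∀ n, DifferentiableOn ℂ (V n) (ball 0 r) := fun n =>
    coh_diff ha hlam hfm hθ0 hθ1 hC₂ hW20 hW2 hφ2 hd hφ2d hK2' differentiableOn_id
      (Set.mapsTo_id _) n
  rw [← hV] at hVb hVeq
  set K2 := C₂ / a * (1 - θ)⁻¹ with hK2d
  have hK2'' : 0 ≤ K2 := by positivity
  refine ⟨fun n z => u n z + V n z, q, K1 + K2, by positivity, fun n => ⟨(hud n).add (hVd n), ?_,
    hqd n, ?_⟩⟩
  · intro z hz
    have h1 := hub n z hz
    have h2 := hVb n z hz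
    have h3 := mul_le_mul_of_nonneg_left (hK2 z hz) hK2''
    refine (norm_add_le _ _).trans ?_
    rw [add_mul]
    linarith
  · intro z hz
    have h1 := hueq n z hz
    have h2 := hVeq n z hz
    have h3 : φ2 n z = (f n (coProj i z) i + u (n+1) (f n (coProj i z))) - q n (coProj i z) := by
      simp only [φ2, p, coProj_idem]
    rw [h3] at h2
    simp only
    linear_combination h1 - h2

end Core



section Conj

def LConj {E : Type*} [NormedAddCommGroup E] [NormedSpace ℂ E] (f g : ℕ → E → E) : Prop :=
  ∃ (r C : ℝ) (h k : ℕ → E → E), 0 < r ∧ 1 ≤ C ∧ ∀ n,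
    DifferentiableOn ℂ (h n) (ball 0 r) ∧ DifferentiableOn ℂ (k n) (ball 0 r) ∧
    ∀ z ∈ ball (0 : E) r, ‖h n z‖ ≤ C * ‖z‖ ∧ ‖k n z‖ ≤ C * ‖z‖ ∧ k n (h n z) = z ∧ h n (k n z) = z ∧
      h (n+1) (f n z) = g n (h n z) ∧ k (n+1) (g n z) = f n (k n z)

lemma LConj.refl {E : Type*} [NormedAddCommGroup E] [NormedSpace ℂ E] (f : ℕ → E → E) :
    LConj f f :=
  ⟨1, 1, fun _ => id, fun _ => id, one_pos, le_refl _, fun n =>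
    ⟨differentiableOn_id, differentiableOn_id, fun z _ => by simp⟩⟩

lemma LConj.symm {E : Type*} [NormedAddCommGroup E] [NormedSpace ℂ E] {f g : ℕ → E → E}
    (h : LConj f g) : LConj g f := by
  obtain ⟨r, C, h, k, hr, hC, H⟩ := h
  refine ⟨r, C, k, h, hr, hC, fun n => ⟨(H n).2.1, (H n).1, fun z hz => ?_⟩⟩
  obtain ⟨h1, h2, h3, h4, h5, h6⟩ := (H n).2.2 z hz
  exact ⟨h2, h1, h4, h3, h6, h5⟩

lemma ca_ball_div {E : Type*} [NormedAddCommGroup E] {x y : E} {r C : ℝ} (hC : 1 ≤ C)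
    (h : ‖y‖ ≤ C * ‖x‖) (hx : ‖x‖ < r / C) : y ∈ ball (0:E) r := by
  rw [mem_ball_zero_iff]
  rw [lt_div_iff₀ (by linarith)] at hx
  linarith

lemma LConj.trans {E : Type*} [NormedAddCommGroup E] [NormedSpace ℂ E] {f g p : ℕ → E → E}
    (h : LConj f g) (h' : LConj g p) : LConj f p := by
  obtain ⟨r, C, h, k, hr, hC, H⟩ := h
  obtain ⟨r', C', h', k', hr', hC', H'⟩ := h'
  have hC0 : 0 < C := by linarith
  have hC0' : 0 < C' := by linarith
  have hdiv : r / C' ≤ r := div_le_self hr.le hC'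
  have hdiv' : r' / C ≤ r' := div_le_self hr'.le hC
  have m1 : ∀ z ∈ ball (0:E) (min (r/C') (r'/C)), z ∈ ball (0:E) r ∧ z ∈ ball (0:E) r' ∧
      ‖z‖ < r/C' ∧ ‖z‖ < r'/C := by
    intro z hz
    rw [mem_ball_zero_iff] at hz
    have h1 := hz.trans_le (min_le_left _ _)
    have h2 := hz.trans_le (min_le_right _ _)
    exact ⟨by rw [mem_ball_zero_iff]; linarith, by rw [mem_ball_zero_iff]; linarith, h1, h2⟩
  have mh : ∀ n, ∀ z ∈ ball (0:E) (min (r/C') (r'/C)), h n z ∈ ball (0:E) r' := fun n z hz =>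
    ca_ball_div hC ((H n).2.2 z (m1 z hz).1).1 (m1 z hz).2.2.2
  have mk : ∀ n, ∀ z ∈ ball (0:E) (min (r/C') (r'/C)), k' n z ∈ ball (0:E) r := fun n z hz =>
    ca_ball_div hC' ((H' n).2.2 z (m1 z hz).2.1).2.1 (m1 z hz).2.2.1
  refine ⟨min (r/C') (r'/C), C' * C, fun n => h' n ∘ h n, fun n => k n ∘ k' n, by positivity,
    by nlinarith, fun n => ⟨?_, ?_, fun z hz => ?_⟩⟩
  · exact (H' n).1.comp ((H n).1.mono fun z hz => (m1 z hz).1) (mh n)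
  · exact (H n).2.1.comp ((H' n).2.1.mono fun z hz => (m1 z hz).2.1) (mk n)
  · obtain ⟨a1, a2, a3, a4, a5, a6⟩ := (H n).2.2 z (m1 z hz).1
    obtain ⟨b1, b2, b3, b4, b5, b6⟩ := (H n).2.2 _ (mk n z hz)
    obtain ⟨c1, c2, c3, c4, c5, c6⟩ := (H' n).2.2 z (m1 z hz).2.1
    obtain ⟨d1, d2, d3, d4, d5, d6⟩ := (H' n).2.2 _ (mh n z hz)
    simp only [Function.comp_apply]
    refine ⟨?_, ?_, ?_, ?_, ?_, ?_⟩
    · calc _ ≤ C' * ‖h n z‖ := d1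
        _ ≤ C' * (C * ‖z‖) := by gcongr
        _ = _ := by ring
    · calc _ ≤ C * ‖k' n z‖ := b2
        _ ≤ C * (C' * ‖z‖) := by gcongr
        _ = _ := by ring
    · rw [d3, a3]
    · rw [b4, c4]
    · rw [a5, d5]
    · rw [c6, b6]

def Adm {E : Type*} [NormedAddCommGroup E] [NormedSpace ℂ E] (L : ℕ → E →L[ℂ] E)
    (f : ℕ → E → E) : Prop :=
  ∃ r C : ℝ, 0 < r ∧ ∀ n, DifferentiableOn ℂ (f n) (ball 0 r) ∧ f n 0 = 0 ∧
    HasFDerivAt (f n) (L n) 0 ∧ ∀ z ∈ ball (0:E) r, ‖f n z‖ ≤ C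

lemma adm_est {E : Type*} [NormedAddCommGroup E] [NormedSpace ℂ E] {L : ℕ → E →L[ℂ] E}
    {f : ℕ → E → E} (hA : Adm L f) {η : ℝ} (hη : 0 < η) :
    ∃ r C : ℝ, 0 < r ∧ r ≤ 1 ∧ 0 ≤ C ∧ ∀ n, DifferentiableOn ℂ (f n) (ball 0 r) ∧
      (∀ z ∈ ball (0:E) r, ‖f n z - L n z‖ ≤ C * ‖z‖ ^ 2) ∧
      ∀ z ∈ ball (0:E) r, ∀ w ∈ ball (0:E) r,
      ‖(f n z - L n z) - (f n w - L n w)‖ ≤ C * (max ‖z‖ ‖w‖ * ‖z - w‖) ∧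
      ‖(f n z - L n z) - (f n w - L n w)‖ ≤ η * ‖z - w‖ := by
  obtain ⟨r, C, hr, H⟩ := hA
  have hC : 0 ≤ C := (norm_nonneg _).trans ((H 0).2.2.2 0 (mem_ball_self hr))
  set C1 := 8 * (3*C/r^2) with hC1
  have hC10 : 0 ≤ C1 := by positivity
  refine ⟨min (r/2) (min 1 (η/(C1+1))), C1, by positivity, (min_le_right _ _).trans (min_le_left _ _),
    hC10, fun n => ?_⟩
  obtain ⟨h1, h2, h3, h4⟩ := H n
  have e1 := ca_c11 hr h1 h2 h3 h4
  have e2 := ca_quad (g := fun z => f n z - L n z) (h1.sub (L n).differentiable.differentiableOn) e1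
    (by positivity)
  have mm : ∀ z ∈ ball (0:E) (min (r/2) (min 1 (η/(C1+1)))), z ∈ ball (0:E) (r/2) ∧
      z ∈ ball (0:E) r ∧ ‖z‖ < η/(C1+1) := by
    intro z hz
    rw [mem_ball_zero_iff] at hz
    simp only [lt_min_iff] at hz
    refine ⟨?_, ?_, hz.2.2⟩ <;> rw [mem_ball_zero_iff] <;> linarith
  refine ⟨h1.mono fun z hz => (mm z hz).2.1, fun z hz => (e1 z (mm z hz).2.1).trans ?_,
    fun z hz w hw => ?_⟩
  · have : 0 ≤ (3*C/r^2) * ‖z‖^2 := by positivity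
    rw [hC1]; linarith
  · have e := e2 z (mm z hz).1 w (mm w hw).1
    refine ⟨e.trans (le_of_eq (by rw [hC1]; ring)), e.trans ?_⟩
    have : max ‖z‖ ‖w‖ ≤ η/(C1+1) := max_le (mm z hz).2.2.le (mm w hw).2.2.le
    calc 8 * (3*C/r^2) * max ‖z‖ ‖w‖ * ‖z - w‖ ≤ (C1+1) * (η/(C1+1)) * ‖z - w‖ := by
          gcongr; linarith
      _ = _ := by field_simp

def LinHyp {k : ℕ} (L : ℕ → (Fin k → ℂ) →L[ℂ] (Fin k → ℂ)) (lam : ℕ → Fin k → ℂ) : Prop :=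
  ∃ (a θ η : ℝ) (M : ℕ → ℝ) (N : ℕ → Fin k → ℝ), 0 < a ∧ 0 ≤ θ ∧ θ < 1 ∧ 0 < η ∧
    ∀ n, (0 ≤ M n ∧ M n + η ≤ θ ∧ ∀ z, ‖L n z‖ ≤ M n * ‖z‖) ∧ ∀ i, a ≤ ‖lam n i‖ ∧
      (M n + η) * (N n i + η) ≤ θ * ‖lam n i‖ ∧
      ∀ z : Fin k → ℂ, (∀ l < i, z l = 0) → ‖L n z‖ ≤ N n i * ‖z‖ ∧ L n z i = lam n i * z i

def NF {k : ℕ} (m : ℕ) (f : ℕ → (Fin k → ℂ) → (Fin k → ℂ)) (lam : ℕ → Fin k → ℂ) : Prop :=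
  ∃ (r : ℝ) (q : ℕ → Fin k → (Fin k → ℂ) → ℂ), 0 < r ∧ ∀ n (j : Fin k), (j:ℕ) < m →
    Differentiable ℂ (q n j) ∧ (∀ z, q n j z = q n j (coProj j z)) ∧
    ∀ z ∈ ball (0 : Fin k → ℂ) r, f n z j = lam n j * z j + q n j z

end Conj



section Step

set_option maxHeartbeats 1000000 in
lemma nf_step {k : ℕ} (i : Fin k) {L : ℕ → (Fin k → ℂ) →L[ℂ] (Fin k → ℂ)} {lam : ℕ → Fin k → ℂ}
    {f : ℕ → (Fin k → ℂ) → (Fin k → ℂ)} (hL : LinHyp L lam) (hA : Adm L f) (hNF : NF i f lam) :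
    ∃ f', Adm L f' ∧ LConj f f' ∧ NF (i+1) f' lam := by
  obtain ⟨a, θ, η, M, N, ha, hθ0, hθ1, hη, HL⟩ := hL
  obtain ⟨rN, q0, hrN, HN⟩ := hNF
  obtain ⟨r', C, hr', hr1', hC, HE⟩ := adm_est hA hη
  obtain ⟨_, _, _, HA⟩ := hA
  have hf0 : ∀ n, f n 0 = 0 := fun n => (HA n).2.1
  have hfd : ∀ n, HasFDerivAt (f n) (L n) 0 := fun n => (HA n).2.2.1
  clear HA
  set r := min r' rN with hrdef
  have hr : 0 < r := lt_min hr' hrN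
  have hsub : ball (0 : Fin k → ℂ) r ⊆ ball 0 r' := ball_subset_ball (min_le_left _ _)
  have hsubN : ball (0 : Fin k → ℂ) r ⊆ ball 0 rN := ball_subset_ball (min_le_right _ _)
  have hM : ∀ n, ∀ z ∈ ball (0 : Fin k → ℂ) r, ‖f n z‖ ≤ (M n + η) * ‖z‖ := by
    intro n z hz
    have h1 := ((HE n).2.2 z (hsub hz) 0 (mem_ball_self hr')).2
    have h2 := (HL n).1.2.2 z
    simp only [hf0, map_zero, sub_zero] at h1
    have : f n z = L n z + (f n z - L n z) := by abel
    rw [this]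
    refine (norm_add_le _ _).trans ?_
    linarith
  have hM1 : ∀ n, ∀ z ∈ ball (0 : Fin k → ℂ) r, ‖f n z‖ ≤ ‖z‖ := by
    intro n z hz
    refine (hM n z hz).trans ?_
    have : (M n + η) * ‖z‖ ≤ 1 * ‖z‖ := by gcongr; linarith [(HL n).1.2.1]
    linarith
  obtain ⟨w, q, C', hC', HW⟩ := step_core i f (fun n => lam n i) (r := r) (a := a) (θ := θ) (C := C)
    (M := fun n => M n + η) (N := fun n => N n i + η) hr ((min_le_left _ _).trans hr1') ha hθ0 hθ1 hC
    (fun n => (HE n).1.mono hsub) (fun n => by linarith [(HL n).1.1]) (fun n => (HL n).1.2.1) hM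
    (by
      intro n z hz w hw hzw l hl
      obtain ⟨_, h2, h3⟩ := HN n l hl
      rw [h3 z (hsubN hz), h3 w (hsubN hw), hzw l hl, h2 z, h2 w,
        coProj_congr fun m hm => hzw m (hm.trans hl)])
    (by
      intro n z hz w hw hzw
      have h1 := ((HE n).2.2 z (hsub hz) w (hsub hw)).2
      have h2 := (((HL n).2 i).2.2 (z - w) (fun l hl => by simp [hzw l hl])).1
      have : f n z - f n w = L n (z - w) + ((f n z - L n z) - (f n w - L n w)) := by
        rw [map_sub]; abel
      rw [this]
      refine (norm_add_le _ _).trans ?_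
      linarith)
    (fun n => ((HL n).2 i).2.1) (fun n => ((HL n).2 i).1)
    (by
      intro n z hz w hw hzw
      have h1 := ((HE n).2.2 z (hsub hz) w (hsub hw)).1
      have h2 := (((HL n).2 i).2.2 (z - w) (fun l hl => by simp [hzw l hl])).2
      refine le_trans (le_of_eq_of_le ?_ (norm_le_pi_norm _ i)) h1
      congr 1
      simp only [map_sub, Pi.sub_apply] at h2 ⊢
      linear_combination h2)
  let W : ℕ → (Fin k → ℂ) → (Fin k → ℂ) := fun n z => Pi.single i (w n z)
  have hWnorm : ∀ n z, ‖W n z‖ = ‖w n z‖ := fun n z => by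
    simp only [W]; exact Pi.norm_single (G := fun _ : Fin k => ℂ) _
  have hWd : ∀ n, DifferentiableOn ℂ (W n) (ball 0 r) := by
    intro n
    rw [differentiableOn_pi]
    intro j
    by_cases hj : j = i
    · subst hj; simp only [W, Pi.single_eq_same]; exact (HW n).1
    · simp only [W, Pi.single_eq_of_ne hj]; exact differentiableOn_const _
  have hWq : ∀ n, ∀ z ∈ ball (0 : Fin k → ℂ) r, ‖W n z‖ ≤ C' * ‖z‖^2 := fun n z hz => by
    rw [hWnorm]; exact (HW n).2.1 z hz
  set r1 := min (r/2) (1/(16*(C'+1))) with hr1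
  have hr10 : 0 < r1 := by positivity
  have hsub1 : ball (0 : Fin k → ℂ) r1 ⊆ ball 0 r := ball_subset_ball (by
    have := min_le_left (r/2) (1/(16*(C'+1))); linarith)
  have hW0 : ∀ n, W n 0 = 0 := fun n => by
    have := hWq n 0 (mem_ball_self hr); simpa using this
  have hWl : ∀ n, ∀ x ∈ ball (0 : Fin k → ℂ) r1, ∀ y ∈ ball (0 : Fin k → ℂ) r1,
      ‖W n x - W n y‖ ≤ 1/2 * ‖x - y‖ := by
    intro n x hx y hy
    have hs : ball (0 : Fin k → ℂ) r1 ⊆ ball 0 (r/2) := ball_subset_ball (min_le_left _ _)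
    refine (ca_quad (hWd n) (hWq n) hC' x (hs hx) y (hs hy)).trans ?_
    rw [mem_ball_zero_iff] at hx hy
    have : max ‖x‖ ‖y‖ ≤ 1/(16*(C'+1)) :=
      max_le (hx.le.trans (min_le_right _ _)) (hy.le.trans (min_le_right _ _))
    have h8 : 8 * C' * (1/(16*(C'+1))) ≤ 1/2 := by
      rw [mul_one_div, div_le_iff₀ (by positivity)]; linarith
    refine le_trans ?_ (mul_le_mul_of_nonneg_right h8 (norm_nonneg _))
    gcongr
  have hinv := fun n => ca_inv (hW0 n) ((hWd n).mono hsub1) (hWl n)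
  choose κ hκd hκ hκ' using hinv
  let h : ℕ → (Fin k → ℂ) → (Fin k → ℂ) := fun n z => z + W n z
  have hhb : ∀ n, ∀ z ∈ ball (0 : Fin k → ℂ) r1, ‖h n z‖ ≤ 3/2 * ‖z‖ := by
    intro n z hz
    have := hWl n z hz 0 (mem_ball_self hr10)
    rw [hW0, sub_zero, sub_zero] at this
    refine (norm_add_le _ _).trans ?_
    linarith
  have hhd : ∀ n, DifferentiableOn ℂ (h n) (ball 0 r1) := fun n =>
    differentiableOn_id.add ((hWd n).mono hsub1)
  have hhκ : ∀ n, ∀ z ∈ ball (0 : Fin k → ℂ) (r1/2), h n (κ n z) = z := fun n z hz => (hκ n z hz).2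
  have hκb : ∀ n, ∀ z ∈ ball (0 : Fin k → ℂ) (r1/2), ‖κ n z‖ ≤ 2 * ‖z‖ := fun n z hz => (hκ n z hz).1
  have hκ0 : ∀ n, κ n 0 = 0 := fun n => by
    have := hκb n 0 (mem_ball_self (by positivity)); simpa using this
  have hκh : ∀ n, ∀ z ∈ ball (0 : Fin k → ℂ) (r1/3), κ n (h n z) = z := by
    intro n z hz
    rw [mem_ball_zero_iff] at hz
    have hz1 : z ∈ ball (0 : Fin k → ℂ) r1 := by rw [mem_ball_zero_iff]; linarith
    apply hκ' n z hz1
    have := hhb n z hz1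
    rw [mem_ball_zero_iff]
    change ‖h n z‖ < _
    linarith
  -- facts for small z
  have F1 : ∀ n, ∀ z ∈ ball (0 : Fin k → ℂ) (r1/8), z ∈ ball (0 : Fin k → ℂ) (r1/2) ∧
      κ n z ∈ ball (0 : Fin k → ℂ) (r1/3) ∧ κ n z ∈ ball (0 : Fin k → ℂ) r1 ∧
      κ n z ∈ ball (0 : Fin k → ℂ) r ∧
      f n (κ n z) ∈ ball (0 : Fin k → ℂ) (r1/3) ∧ f n (κ n z) ∈ ball (0 : Fin k → ℂ) r1 ∧
      ‖f n (κ n z)‖ ≤ 2 * ‖z‖ := by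
    intro n z hz
    rw [mem_ball_zero_iff] at hz
    have b1 : z ∈ ball (0 : Fin k → ℂ) (r1/2) := by rw [mem_ball_zero_iff]; linarith
    have b2 := hκb n z b1
    have b3 : κ n z ∈ ball (0 : Fin k → ℂ) r1 := by rw [mem_ball_zero_iff]; linarith
    have b4 := hM1 n _ (hsub1 b3)
    refine ⟨b1, ?_, b3, hsub1 b3, ?_, ?_, by linarith⟩ <;> rw [mem_ball_zero_iff] <;> linarith
  let f' : ℕ → (Fin k → ℂ) → (Fin k → ℂ) := fun n z => h (n+1) (f n (κ n z))
  have hr8 : 0 < r1/8 := by positivity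
  refine ⟨f', ?_, ?_, ?_⟩
  · refine ⟨r1/8, 3 * (r1/8), hr8, fun n => ⟨?_, ?_, ?_, ?_⟩⟩
    · refine (hhd (n+1)).comp (((HE n).1.mono hsub).comp ((hκd n).mono fun z hz => (F1 n z hz).1)
        fun z hz => (F1 n z hz).2.2.2.1) fun z hz => (F1 n z hz).2.2.2.2.2.1
    · simp only [f', hκ0, hf0, h, hW0, add_zero]
    · have d1 : HasFDerivAt (κ n) (ContinuousLinearMap.id ℂ (Fin k → ℂ)) 0 := by
        refine ca_hasFDerivAt_of_quad (r := r1/8) (C := 4*C') hr8 (hκ0 n) fun z hz => ?_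
        have e1 := hhκ n z (F1 n z hz).1
        have e2 := hκb n z (F1 n z hz).1
        have e3 := hWq n _ (F1 n z hz).2.2.2.1
        have : κ n z - (ContinuousLinearMap.id ℂ (Fin k → ℂ)) z = - W n (κ n z) := by
          simp only [h] at e1
          conv_lhs => rw [ContinuousLinearMap.id_apply, ← e1]
          rw [e1]
          nth_rewrite 2 [← e1]
          abel
        rw [this, norm_neg]
        refine e3.trans ?_
        calc C' * ‖κ n z‖^2 ≤ C' * (2*‖z‖)^2 := by gcongr
          _ = _ := by ring
      have d2 : HasFDerivAt (h (n+1)) (ContinuousLinearMap.id ℂ (Fin k → ℂ)) 0 := by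
        refine ca_hasFDerivAt_of_quad (r := r) (C := C') hr (by simp [h, hW0]) fun z hz => ?_
        simpa [h] using hWq (n+1) z hz
      have d3 : HasFDerivAt (f n) (L n) (κ n 0) := by rw [hκ0]; exact hfd n
      have d4 := d3.comp 0 d1
      have d5 : HasFDerivAt (h (n+1)) (ContinuousLinearMap.id ℂ (Fin k → ℂ)) ((f n ∘ κ n) 0) := by
        simp only [Function.comp_apply, hκ0, hf0]; exact d2
      have d6 := d5.comp 0 d4
      simpa using d6
    · intro z hz
      have e := hhb (n+1) _ (F1 n z hz).2.2.2.2.2.1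
      have e' := (F1 n z hz).2.2.2.2.2.2
      rw [mem_ball_zero_iff] at hz
      simp only [f']; linarith
  · refine ⟨r1/8, 2, h, κ, hr8, by norm_num, fun n => ⟨(hhd n).mono ?_, (hκd n).mono ?_, fun z hz => ?_⟩⟩
    · exact ball_subset_ball (by linarith)
    · exact ball_subset_ball (by linarith)
    · have z3 : z ∈ ball (0 : Fin k → ℂ) (r1/3) := ball_subset_ball (by linarith) hz
      have z1 : z ∈ ball (0 : Fin k → ℂ) r1 := ball_subset_ball (by linarith) hz
      refine ⟨(hhb n z z1).trans ?_, hκb n z (F1 n z hz).1, hκh n z z3, hhκ n z (F1 n z hz).1, ?_, ?_⟩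
      · have := norm_nonneg z; linarith
      · simp only [f']; rw [hκh n z z3]
      · simp only [f']; rw [hκh (n+1) _ (F1 n z hz).2.2.2.2.1]
  · refine ⟨min (r1/8) rN, fun n j => if j = i then fun z => q n (coProj i z) else q0 n j,
      by positivity, fun n j hj => ?_⟩
    have hco : ∀ z ∈ ball (0 : Fin k → ℂ) (r1/8), ∀ l, l ≠ i → κ n z l = z l := by
      intro z hz l hl
      have := congrFun (hhκ n z (F1 n z hz).1) l
      simpa [h, W, Pi.single_eq_of_ne hl] using this
    by_cases hji : j = i
    · subst hji
      simp only [if_true]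
      refine ⟨(HW n).2.2.1.comp (coProj_diff j), fun z => by rw [coProj_idem], fun z hz => ?_⟩
      have hz8 : z ∈ ball (0 : Fin k → ℂ) (r1/8) := ball_subset_ball (min_le_left _ _) hz
      have e := (HW n).2.2.2 _ (F1 n z hz8).2.2.2.1
      have e2 := congrFun (hhκ n z (F1 n z hz8).1) j
      simp only [h, W, Pi.add_apply, Pi.single_eq_same] at e2
      simp only [f', h, W, Pi.add_apply, Pi.single_eq_same]
      rw [e, e2, coProj_congr fun l hl => hco z hz8 l (ne_of_lt hl)]
    · have hlt : j < i := by
        rcases lt_or_eq_of_le (Nat.lt_succ_iff.1 hj) with h | h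
        · exact h
        · exact absurd (Fin.ext h) hji
      simp only [if_neg hji]
      obtain ⟨g1, g2, g3⟩ := HN n j hlt
      refine ⟨g1, g2, fun z hz => ?_⟩
      have hz8 : z ∈ ball (0 : Fin k → ℂ) (r1/8) := ball_subset_ball (min_le_left _ _) hz
      have e := g3 _ (hsubN (F1 n z hz8).2.2.2.1)
      simp only [f', h, W, Pi.add_apply, Pi.single_eq_of_ne hji, add_zero]
      rw [e, hco z hz8 j hji, g2 (κ n z), g2 z,
        coProj_congr fun l hl => hco z hz8 l (ne_of_lt (hl.trans hlt))]

lemma nf_all {k : ℕ} {L : ℕ → (Fin k → ℂ) →L[ℂ] (Fin k → ℂ)} {lam : ℕ → Fin k → ℂ}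
    {f : ℕ → (Fin k → ℂ) → (Fin k → ℂ)} (hL : LinHyp L lam) (hA : Adm L f) :
    ∃ f', Adm L f' ∧ LConj f f' ∧ NF k f' lam := by
  have : ∀ m, m ≤ k → ∃ f', Adm L f' ∧ LConj f f' ∧ NF m f' lam := by
    intro m
    induction m with
    | zero =>
      intro _
      exact ⟨f, hA, LConj.refl f, 1, fun _ _ _ => 0, one_pos, fun n j hj => absurd hj (by omega)⟩
    | succ m ih =>
      intro hm
      obtain ⟨g, g1, g2, g3⟩ := ih (by omega)
      obtain ⟨f', e1, e2, e3⟩ := nf_step ⟨m, by omega⟩ hL g1 g3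
      exact ⟨f', e1, g2.trans e2, e3⟩
  exact this k le_rfl

end Step


section Basin

lemma real_contr {u e : ℕ → ℝ} {θ : ℝ} (hu : ∀ n, 0 ≤ u n) (hθ0 : 0 ≤ θ) (hθ1 : θ < 1)
    (he : Tendsto e atTop (𝓝 0)) (h : ∀ n, u (n+1) ≤ θ * u n + e n) : Tendsto u atTop (𝓝 0) := by
  rw [Metric.tendsto_atTop]
  intro ε hε
  have h1 : 0 < (1-θ)*(ε/2) := mul_pos (by linarith) (by linarith)
  obtain ⟨N, hN⟩ := (Metric.tendsto_atTop.1 he) _ h1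
  have hN' : ∀ n ≥ N, e n ≤ (1-θ)*(ε/2) := fun n hn => by
    have := hN n hn
    rw [Real.dist_eq, sub_zero] at this
    exact (le_abs_self _).trans this.le
  have hm : ∀ m, u (N+m) ≤ θ^m * u N + ε/2 := by
    intro m
    induction m with
    | zero => simp; linarith
    | succ m ih =>
      have a1 := h (N+m)
      have a2 := hN' (N+m) (by omega)
      have a3 : θ * u (N+m) ≤ θ * (θ^m * u N + ε/2) := by gcongr
      calc u (N+(m+1)) ≤ _ := a1
        _ ≤ θ * (θ^m * u N + ε/2) + (1-θ)*(ε/2) := by linarith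
        _ = _ := by ring
  have ht : Tendsto (fun m => θ^m * u N) atTop (𝓝 0) := by
    simpa using (tendsto_pow_atTop_nhds_zero_of_lt_one hθ0 hθ1).mul_const (u N)
  obtain ⟨K, hK⟩ := (Metric.tendsto_atTop.1 ht) (ε/2) (by linarith)
  refine ⟨N+K, fun n hn => ?_⟩
  have b1 := hm (n-N)
  have b2 := hK (n-N) (by omega)
  rw [show N + (n-N) = n by omega] at b1
  rw [Real.dist_eq, sub_zero] at b2 ⊢
  rw [abs_of_nonneg (hu n)]
  linarith [le_abs_self (θ^(n-N) * u N)]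

def invComp {α : Type*} (f : ℕ → α → α) : ℕ → α → α
  | 0 => id
  | n + 1 => invComp f n ∘ f n

lemma seqComp_invComp {α : Type*} {g gi : ℕ → α → α} (h : ∀ n x, g n (gi n x) = x) (n : ℕ) :
    ∀ x, seqComp g n (invComp gi n x) = x := by
  induction n with
  | zero => intro x; rfl
  | succ n ih =>
    intro x
    simp only [seqComp, invComp, Function.comp_apply]
    rw [ih, h]

lemma seqComp_inj {α : Type*} {g gi : ℕ → α → α} (h : ∀ n x, gi n (g n x) = x) (n : ℕ) :
    Function.Injective (seqComp g n) := by
  induction n with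
  | zero => exact Function.injective_id
  | succ n ih => exact (Function.LeftInverse.injective (h n)).comp ih

variable {E : Type*} [NormedAddCommGroup E] [NormedSpace ℂ E]

lemma seqComp_diff {f : ℕ → E → E} (h : ∀ n, Differentiable ℂ (f n)) (n : ℕ) :
    Differentiable ℂ (seqComp f n) := by
  induction n with
  | zero => exact differentiable_id
  | succ n ih => exact (h n).comp ih

lemma invComp_diff {f : ℕ → E → E} (h : ∀ n, Differentiable ℂ (f n)) (n : ℕ) :
    Differentiable ℂ (invComp f n) := by
  induction n with
  | zero => exact differentiable_id
  | succ n ih => exact ih.comp (h n)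

lemma conj_ext {f g gi h : ℕ → E → E} {r : ℝ} (hr : 0 < r)
    (hfd : ∀ n, Differentiable ℂ (f n)) (hgd : ∀ n, Differentiable ℂ (gi n))
    (hg1 : ∀ n x, g n (gi n x) = x) (hg2 : ∀ n x, gi n (g n x) = x)
    (hh : ∀ n, DifferentiableOn ℂ (h n) (ball 0 r))
    (hc : ∀ n, ∀ z ∈ ball (0:E) r, h (n+1) (f n z) = g n (h n z))
    (hm : ∀ n, ∀ z ∈ ball (0:E) r, f n z ∈ ball (0:E) r) :
    ∃ Ψ : E → E, DifferentiableOn ℂ Ψ {z | Tendsto (fun n => seqComp f n z) atTop (𝓝 0)} ∧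
      ∀ z, Tendsto (fun n => seqComp f n z) atTop (𝓝 0) →
        ∃ N, ∀ n ≥ N, seqComp g n (Ψ z) = h n (seqComp f n z) := by
  classical
  let ψ : ℕ → E → E := fun n z => invComp gi n (h n (seqComp f n z))
  have hst : ∀ N z, seqComp f N z ∈ ball (0:E) r → ∀ m, seqComp f (N+m) z ∈ ball (0:E) r ∧
      ψ (N+m) z = ψ N z := by
    intro N z hz m
    induction m with
    | zero => exact ⟨hz, rfl⟩
    | succ m ih =>
      refine ⟨hm (N+m) _ ih.1, ?_⟩
      rw [← ih.2]
      change invComp gi (N+m) (gi (N+m) (h (N+m+1) (f (N+m) (seqComp f (N+m) z)))) = _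
      rw [hc _ _ ih.1, hg2]
  have hst2 : ∀ N N' z, seqComp f N z ∈ ball (0:E) r → seqComp f N' z ∈ ball (0:E) r →
      ψ N z = ψ N' z := by
    intro N N' z h1 h2
    rw [← (hst N z h1 N').2, ← (hst N' z h2 N).2, add_comm]
  have hex : ∀ z, ∃ w, ∀ N, seqComp f N z ∈ ball (0:E) r → w = ψ N z := by
    intro z
    by_cases hN : ∃ N, seqComp f N z ∈ ball (0:E) r
    · obtain ⟨N, hN⟩ := hN
      exact ⟨ψ N z, fun N' h' => hst2 N N' z hN h'⟩
    · exact ⟨0, fun N h => absurd ⟨N, h⟩ hN⟩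
  choose Ψ hΨ using hex
  have hb : ∀ z, Tendsto (fun n => seqComp f n z) atTop (𝓝 0) → ∃ N, seqComp f N z ∈ ball (0:E) r :=
    fun z hz => (hz.eventually (ball_mem_nhds 0 hr)).exists
  refine ⟨Ψ, fun z hz => ?_, fun z hz => ?_⟩
  · obtain ⟨N, hN⟩ := hb z hz
    apply DifferentiableAt.differentiableWithinAt
    have hU : seqComp f N ⁻¹' ball (0:E) r ∈ 𝓝 z :=
      (isOpen_ball.preimage (seqComp_diff hfd N).continuous).mem_nhds hN
    have hd : DifferentiableAt ℂ (ψ N) z :=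
      ((invComp_diff hgd N) _).comp z
        (((hh N).differentiableAt (isOpen_ball.mem_nhds hN)).comp z (seqComp_diff hfd N z))
    refine hd.congr_of_eventuallyEq ?_
    filter_upwards [hU] with y hy using hΨ y N hy
  · obtain ⟨N, hN⟩ := hb z hz
    refine ⟨N, fun n hn => ?_⟩
    have h1 := (hst N z hN (n-N)).1
    rw [show N + (n-N) = n by omega] at h1
    rw [hΨ z n h1]
    exact seqComp_invComp hg1 n _

lemma basin_biholo {f fi g gi : ℕ → E → E} (hfd : ∀ n, Differentiable ℂ (f n))
    (hfid : ∀ n, Differentiable ℂ (fi n)) (hf1 : ∀ n x, f n (fi n x) = x)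
    (hf2 : ∀ n x, fi n (f n x) = x) (hgd : ∀ n, Differentiable ℂ (g n))
    (hgid : ∀ n, Differentiable ℂ (gi n)) (hg1 : ∀ n x, g n (gi n x) = x)
    (hg2 : ∀ n x, gi n (g n x) = x)
    (hfr : ∃ r > 0, ∀ n, ∀ z ∈ ball (0:E) r, ‖f n z‖ ≤ ‖z‖)
    (hgr : ∃ r > 0, ∀ n, ∀ z ∈ ball (0:E) r, ‖g n z‖ ≤ ‖z‖)
    (hgb : ∀ w, Tendsto (fun n => seqComp g n w) atTop (𝓝 0)) (hconj : LConj f g) :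
    ∃ Ψ Φ : E → E,
      DifferentiableOn ℂ Ψ {z | Tendsto (fun n => seqComp f n z) atTop (𝓝 0)} ∧
      Differentiable ℂ Φ ∧
      (∀ w, Tendsto (fun n => seqComp f n (Φ w)) atTop (𝓝 0)) ∧
      (∀ z, Tendsto (fun n => seqComp f n z) atTop (𝓝 0) → Φ (Ψ z) = z) ∧ (∀ w, Ψ (Φ w) = w) := by
  obtain ⟨r1, hr1, hfr⟩ := hfr
  obtain ⟨r2, hr2, hgr⟩ := hgr
  obtain ⟨r, C, h, κ, hr, hC, H⟩ := hconj
  have inv : ∀ (ρ : ℝ) (p : ℕ → E → E), (∀ n, ∀ z ∈ ball (0:E) ρ, ‖p n z‖ ≤ ‖z‖) →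
      ∀ n, ∀ z ∈ ball (0:E) (min ρ r), p n z ∈ ball (0:E) (min ρ r) := by
    intro ρ p hp n z hz
    have := hp n z (ball_subset_ball (min_le_left _ _) hz)
    rw [mem_ball_zero_iff] at hz ⊢
    linarith
  obtain ⟨Ψ, hΨd, hΨ⟩ := conj_ext (r := min r1 r) (lt_min hr1 hr) hfd hgid hg1 hg2 (h := h)
    (fun n => (H n).1.mono (ball_subset_ball (min_le_right _ _)))
    (fun n z hz => ((H n).2.2 z (ball_subset_ball (min_le_right _ _) hz)).2.2.2.2.1) (inv r1 f hfr)
  obtain ⟨Φ, hΦd, hΦ⟩ := conj_ext (r := min r2 r) (lt_min hr2 hr) hgd hfid hf1 hf2 (h := κ)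
    (fun n => (H n).2.1.mono (ball_subset_ball (min_le_right _ _)))
    (fun n z hz => ((H n).2.2 z (ball_subset_ball (min_le_right _ _) hz)).2.2.2.2.2) (inv r2 g hgr)
  have hmem : ∀ w, Tendsto (fun n => seqComp f n (Φ w)) atTop (𝓝 0) := by
    intro w
    obtain ⟨N, hN⟩ := hΦ w (hgb w)
    have h1 : Tendsto (fun n => C * ‖seqComp g n w‖) atTop (𝓝 0) := by
      simpa using (hgb w).norm.const_mul C
    refine squeeze_zero_norm' ?_ h1
    filter_upwards [(hgb w).eventually (ball_mem_nhds 0 hr), eventually_ge_atTop N] with n hn1 hn2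
    rw [hN n hn2]
    exact ((H n).2.2 _ hn1).2.1
  refine ⟨Ψ, Φ, hΨd, fun w => ?_, hmem, fun z hz => ?_, fun w => ?_⟩
  · have : DifferentiableOn ℂ Φ Set.univ := by
      convert hΦd using 1
      symm; exact Set.eq_univ_of_forall hgb
    exact (this.differentiableAt univ_mem)
  · obtain ⟨N, hN⟩ := hΨ z hz
    obtain ⟨N', hN'⟩ := hΦ (Ψ z) (hgb _)
    obtain ⟨n, ⟨hn1, hn2⟩, hn3⟩ := ((hz.eventually (ball_mem_nhds 0 hr)).and
      (eventually_ge_atTop N)|>.and (eventually_ge_atTop N')).exists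
    apply seqComp_inj hf2 n
    rw [hN' n hn3, hN n hn2, ((H n).2.2 _ hn1).2.2.1]
  · obtain ⟨N, hN⟩ := hΨ (Φ w) (hmem w)
    obtain ⟨N', hN'⟩ := hΦ w (hgb _)
    obtain ⟨n, ⟨hn1, hn2⟩, hn3⟩ := (((hgb w).eventually (ball_mem_nhds 0 hr)).and
      (eventually_ge_atTop N)|>.and (eventually_ge_atTop N')).exists
    apply seqComp_inj hg2 n
    rw [hN n hn2, hN' n hn3, ((H n).2.2 _ hn1).2.2.2.1]

end Basin

section Tri
variable {k : ℕ}

def triG (lam : Fin k → ℂ) (q : Fin k → (Fin k → ℂ) → ℂ) (z : Fin k → ℂ) : Fin k → ℂ :=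
  fun j => lam j * z j + q j z

def triS (lam : Fin k → ℂ) (q : Fin k → (Fin k → ℂ) → ℂ) : ℕ → (Fin k → ℂ) → (Fin k → ℂ)
  | 0 => fun _ => 0
  | m+1 => fun w j => (w j - q j (triS lam q m w)) / lam j

lemma triG_diff {lam : Fin k → ℂ} {q : Fin k → (Fin k → ℂ) → ℂ} (hq : ∀ j, Differentiable ℂ (q j)) :
    Differentiable ℂ (triG lam q) := by
  rw [differentiable_pi]
  intro j
  have := hq j
  unfold triG
  fun_prop

lemma triS_diff {lam : Fin k → ℂ} {q : Fin k → (Fin k → ℂ) → ℂ} (hq : ∀ j, Differentiable ℂ (q j))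
    (m : ℕ) : Differentiable ℂ (triS lam q m) := by
  induction m with
  | zero => exact differentiable_const _
  | succ m ih =>
    rw [differentiable_pi]
    intro j
    have h1 := (hq j).comp ih
    have h2 : Differentiable ℂ fun w : Fin k → ℂ => w j := by fun_prop
    have := (h2.sub h1).mul_const (lam j)⁻¹
    simp only [triS, div_eq_mul_inv]
    exact this

lemma triS_stab {lam : Fin k → ℂ} {q : Fin k → (Fin k → ℂ) → ℂ}
    (hc : ∀ j z, q j z = q j (coProj j z)) (w : Fin k → ℂ) (m : ℕ) :
    ∀ j : Fin k, (j:ℕ) < m → triS lam q (m+1) w j = triS lam q m w j := by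
  induction m with
  | zero => intro j hj; omega
  | succ m ih =>
    intro j hj
    change (w j - q j (triS lam q (m+1) w)) / lam j = (w j - q j (triS lam q m w)) / lam j
    rw [hc j (triS lam q (m+1) w), hc j (triS lam q m w), coProj_congr fun l hl => ih l (by
      have : (l:ℕ) < j := hl
      omega)]

lemma triG_right {lam : Fin k → ℂ} {q : Fin k → (Fin k → ℂ) → ℂ} (hl : ∀ j, lam j ≠ 0)
    (hc : ∀ j z, q j z = q j (coProj j z)) (w : Fin k → ℂ) :
    triG lam q (triS lam q k w) = w := by
  ext j
  have h := triS_stab (lam := lam) hc w k j j.2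
  change lam j * (triS lam q k w) j + q j (triS lam q k w) = w j
  rw [← h]
  change lam j * ((w j - q j (triS lam q k w)) / lam j) + _ = _
  have := hl j
  field_simp
  ring

lemma triG_left {lam : Fin k → ℂ} {q : Fin k → (Fin k → ℂ) → ℂ} (hl : ∀ j, lam j ≠ 0)
    (hc : ∀ j z, q j z = q j (coProj j z)) (z : Fin k → ℂ) :
    triS lam q k (triG lam q z) = z := by
  have hinj : Function.Injective (triG lam q) := by
    intro x y hxy
    have : ∀ m, ∀ j : Fin k, (j:ℕ) < m → x j = y j := by
      intro m
      induction m with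
      | zero => intro j hj; omega
      | succ m ih =>
        intro j hj
        have e : lam j * x j + q j x = lam j * y j + q j y := congrFun hxy j
        rw [hc j x, hc j y, coProj_congr fun l hl' => ih l (by
          have : (l:ℕ) < j := hl'
          omega)] at e
        exact mul_left_cancel₀ (hl j) (add_right_cancel e)
    ext j
    exact this k j j.2
  exact hinj (triG_right hl hc _)

lemma triG_basin {lam : ℕ → Fin k → ℂ} {q : ℕ → Fin k → (Fin k → ℂ) → ℂ} {θ r B : ℝ}
    (hθ0 : 0 ≤ θ) (hθ1 : θ < 1)
    (hl : ∀ n j, ‖lam n j‖ ≤ θ) (hc : ∀ n j z, q n j z = q n j (coProj j z)) (hr : 0 < r)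
    (hq : ∀ n j, ∀ z ∈ ball (0 : Fin k → ℂ) r, ‖q n j z‖ ≤ B * ‖z‖) (w : Fin k → ℂ) :
    Tendsto (fun n => seqComp (fun n => triG (lam n) (q n)) n w) atTop (𝓝 0) := by
  set x := fun n => seqComp (fun n => triG (lam n) (q n)) n w with hx
  have hrec : ∀ n j, x (n+1) j = lam n j * x n j + q n j (coProj j (x n)) := by
    intro n j
    rw [← hc]
    rfl
  have : ∀ m, ∀ j : Fin k, (j:ℕ) < m → Tendsto (fun n => x n j) atTop (𝓝 0) := by
    intro m
    induction m with
    | zero => intro j hj; omega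
    | succ m ih =>
      intro j hj
      have hco : Tendsto (fun n => coProj j (x n)) atTop (𝓝 0) := by
        rw [tendsto_pi_nhds]
        intro l
        by_cases h : l < j
        · simp only [coProj_lt h]
          refine ih l ?_
          have : (l:ℕ) < j := h
          omega
        · simp only [coProj_ge h]; exact tendsto_const_nhds
      have hq0 : Tendsto (fun n => ‖q n j (coProj j (x n))‖) atTop (𝓝 0) := by
        have h1 : Tendsto (fun n => B * ‖coProj j (x n)‖) atTop (𝓝 0) := by
          simpa using hco.norm.const_mul B
        refine squeeze_zero' (Eventually.of_forall fun n => norm_nonneg _) ?_ h1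
        filter_upwards [hco.eventually (ball_mem_nhds 0 hr)] with n hn
        exact hq n j _ hn
      rw [tendsto_zero_iff_norm_tendsto_zero]
      refine real_contr (fun n => norm_nonneg _) hθ0 hθ1 hq0 fun n => ?_
      rw [hrec]
      refine (norm_add_le _ _).trans ?_
      rw [norm_mul]
      gcongr
      exact hl n j
  rw [tendsto_pi_nhds]
  intro j
  exact this k j j.2

lemma lin_contr {L : ℕ → (Fin k → ℂ) →L[ℂ] (Fin k → ℂ)} {lam : ℕ → Fin k → ℂ}
    {f : ℕ → (Fin k → ℂ) → (Fin k → ℂ)} (hL : LinHyp L lam) (hA : Adm L f) :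
    ∃ r > 0, ∀ n, ∀ z ∈ ball (0 : Fin k → ℂ) r, ‖f n z‖ ≤ ‖z‖ := by
  obtain ⟨a, θ, η, M, N, ha, hθ0, hθ1, hη, HL⟩ := hL
  obtain ⟨r', C, hr', hr1', hC, HE⟩ := adm_est hA hη
  obtain ⟨_, _, _, HA⟩ := hA
  refine ⟨r', hr', fun n z hz => ?_⟩
  have h1 := ((HE n).2.2 z hz 0 (mem_ball_self hr')).2
  have h2 := (HL n).1.2.2 z
  simp only [(HA n).2.1, map_zero, sub_zero] at h1
  have : f n z = L n z + (f n z - L n z) := by abel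
  rw [this]
  refine (norm_add_le _ _).trans ?_
  have : (M n + η) * ‖z‖ ≤ 1 * ‖z‖ := by gcongr; linarith [(HL n).1.2.1]
  linarith

lemma main_pi {L : ℕ → (Fin k → ℂ) →L[ℂ] (Fin k → ℂ)} {lam : ℕ → Fin k → ℂ}
    {f fi : ℕ → (Fin k → ℂ) → (Fin k → ℂ)} (hL : LinHyp L lam) (hA : Adm L f)
    (hfd : ∀ n, Differentiable ℂ (f n))
    (hfid : ∀ n, Differentiable ℂ (fi n)) (hf1 : ∀ n x, f n (fi n x) = x)
    (hf2 : ∀ n x, fi n (f n x) = x) :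
    ∃ Ψ Φ : (Fin k → ℂ) → (Fin k → ℂ),
      DifferentiableOn ℂ Ψ {z | Tendsto (fun n => seqComp f n z) atTop (𝓝 0)} ∧
      Differentiable ℂ Φ ∧
      (∀ w, Tendsto (fun n => seqComp f n (Φ w)) atTop (𝓝 0)) ∧
      (∀ z, Tendsto (fun n => seqComp f n z) atTop (𝓝 0) → Φ (Ψ z) = z) ∧ (∀ w, Ψ (Φ w) = w) := by
  obtain ⟨f', hA', hc, r, q, hr, hq⟩ := nf_all hL hA
  obtain ⟨r', hr', hcon⟩ := lin_contr hL hA'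
  have hfr := lin_contr hL hA
  obtain ⟨a, θ, η, M, N, ha, hθ0, hθ1, hη, HL⟩ := hL
  have hlam0 : ∀ n j, lam n j ≠ 0 := fun n j h => by
    have := ((HL n).2 j).1
    rw [h, norm_zero] at this; linarith
  have hlamθ : ∀ n j, ‖lam n j‖ ≤ θ := by
    intro n j
    have h1 := (((HL n).2 j).2.2 (Pi.single j 1) (fun l hl => by simp [hl.ne])).2
    have h2 := (HL n).1.2.2 (Pi.single j 1)
    have h3 := norm_le_pi_norm (L n (Pi.single j 1)) j
    rw [h1, Pi.single_eq_same, mul_one] at h3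
    have h4 : ‖(Pi.single j 1 : Fin k → ℂ)‖ = 1 := by
      rw [Pi.norm_single (G := fun _ : Fin k => ℂ)]; simp
    rw [h4] at h2
    linarith [(HL n).1.2.1]
  have hq1 := fun n j => (hq n j j.2).1
  have hq2 := fun n j => (hq n j j.2).2.1
  have hq3 : ∀ n, ∀ z ∈ ball (0 : Fin k → ℂ) r, f' n z = triG (lam n) (q n) z := fun n z hz => by
    ext j
    exact (hq n j j.2).2.2 z hz
  have hcG : LConj f' (fun n => triG (lam n) (q n)) :=
    ⟨r, 1, fun _ => id, fun _ => id, hr, le_rfl, fun n => ⟨differentiableOn_id, differentiableOn_id,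
      fun z hz => ⟨by simp, by simp, rfl, rfl, hq3 n z hz, (hq3 n z hz).symm⟩⟩⟩
  have hGr : ∀ n, ∀ z ∈ ball (0 : Fin k → ℂ) (min r r'), ‖triG (lam n) (q n) z‖ ≤ ‖z‖ := by
    intro n z hz
    rw [← hq3 n z (ball_subset_ball (min_le_left _ _) hz)]
    exact hcon n z (ball_subset_ball (min_le_right _ _) hz)
  refine basin_biholo (gi := fun n => triS (lam n) (q n) k) hfd hfid hf1 hf2
    (fun n => triG_diff (hq1 n)) (fun n => triS_diff (hq1 n) k)
    (fun n => triG_right (hlam0 n) (hq2 n)) (fun n => triG_left (hlam0 n) (hq2 n)) hfr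
    ⟨min r r', lt_min hr hr', hGr⟩ ?_ (hc.trans hcG)
  refine triG_basin (r := min r r') (B := 2) hθ0 hθ1 hlamθ hq2 (lt_min hr hr') fun n j z hz => ?_
  have e1 := (norm_le_pi_norm (triG (lam n) (q n) z) j).trans (hGr n z hz)
  have e2 : q n j z = triG (lam n) (q n) z j - lam n j * z j := by simp [triG]
  rw [e2]
  refine (norm_sub_le _ _).trans ?_
  rw [norm_mul]
  have e3 := norm_le_pi_norm z j
  have e4 : ‖lam n j‖ * ‖z j‖ ≤ 1 * ‖z‖ := by
    gcongr; linarith [hlamθ n j]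
  linarith

end Tri

section Final

lemma fderiv_bounds {E : Type*} [NormedAddCommGroup E] [NormedSpace ℂ E] {F : E → E} {a b : ℝ}
    (hd : DifferentiableAt ℂ F 0) (h0 : F 0 = 0)
    (hb : ∀ z ∈ ball (0 : E) 1, a * ‖z‖ ≤ ‖F z‖ ∧ ‖F z‖ ≤ b * ‖z‖) (v : E) :
    a * ‖v‖ ≤ ‖fderiv ℂ F 0 v‖ ∧ ‖fderiv ℂ F 0 v‖ ≤ b * ‖v‖ := by
  have h1 : HasDerivAt (fun t : ℂ => F (t • v)) (fderiv ℂ F 0 v) 0 := by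
    have e1 : HasDerivAt (fun t : ℂ => t • v) v 0 := by
      simpa using (hasDerivAt_id (0:ℂ)).smul_const v
    have e2 : HasFDerivAt F (fderiv ℂ F 0) ((fun t : ℂ => t • v) 0) := by
      simpa using hd.hasFDerivAt
    exact e2.comp_hasDerivAt 0 e1
  have h2 := h1.tendsto_slope_zero.norm
  have h3 : ∀ᶠ t : ℂ in 𝓝[≠] 0, a * ‖v‖ ≤ ‖t⁻¹ • (F ((0+t) • v) - F ((0:ℂ) • v))‖ ∧
      ‖t⁻¹ • (F ((0+t) • v) - F ((0:ℂ) • v))‖ ≤ b * ‖v‖ := by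
    have hc : Tendsto (fun t : ℂ => t • v) (𝓝[≠] 0) (𝓝 0) := by
      have : Continuous fun t : ℂ => t • v := by fun_prop
      have := this.tendsto 0
      rw [zero_smul] at this
      exact this.mono_left nhdsWithin_le_nhds
    filter_upwards [hc.eventually (ball_mem_nhds 0 one_pos), self_mem_nhdsWithin] with t ht ht0
    have htp : 0 < ‖t‖ := norm_pos_iff.2 ht0
    obtain ⟨g1, g2⟩ := hb _ ht
    rw [norm_smul] at g1 g2
    rw [zero_add, zero_smul, h0, sub_zero, norm_smul, norm_inv]
    constructor
    · rw [le_inv_mul_iff₀ htp]; linarith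
    · rw [inv_mul_le_iff₀ htp]; linarith
  exact ⟨ge_of_tendsto h2 (h3.mono fun t ht => ht.1), le_of_tendsto h2 (h3.mono fun t ht => ht.2)⟩

lemma row_bound {k : ℕ} {c : Fin k → ℂ} {m : Fin k} {δ : ℝ} (hδ : 0 ≤ δ)
    (hc : ∀ j, j ≠ m → ‖c j‖ ≤ δ) (z : Fin k → ℂ) :
    ‖∑ j, c j * z j‖ ≤ (‖c m‖ + k * δ) * ‖z‖ := by
  rw [← Finset.add_sum_erase _ _ (Finset.mem_univ m)]
  refine (norm_add_le _ _).trans ?_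
  have h1 : ‖c m * z m‖ ≤ ‖c m‖ * ‖z‖ := by
    rw [norm_mul]; gcongr; exact norm_le_pi_norm z m
  have h2 : ‖∑ j ∈ Finset.univ.erase m, c j * z j‖ ≤ k * (δ * ‖z‖) := by
    refine (norm_sum_le _ _).trans ?_
    calc ∑ j ∈ Finset.univ.erase m, ‖c j * z j‖ ≤ ∑ j ∈ Finset.univ.erase m, δ * ‖z‖ := by
          refine Finset.sum_le_sum fun j hj => ?_
          rw [norm_mul]
          gcongr
          · exact hc j (Finset.ne_of_mem_erase hj)
          · exact norm_le_pi_norm z j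
      _ ≤ ∑ j : Fin k, δ * ‖z‖ := by
          refine Finset.sum_le_sum_of_subset_of_nonneg (Finset.subset_univ _) fun _ _ _ => by positivity
      _ = _ := by simp
  linarith

lemma lin_hyp_of {k : ℕ} [Nonempty (Fin k)] {L : ℕ → (Fin k → ℂ) →L[ℂ] (Fin k → ℂ)}
    {c : ℕ → Fin k → Fin k → ℂ} {α b ξ s δ : ℝ} (hα : 0 < α) (hb : b < 1) (hb0 : 0 ≤ b)
    (hξ : ξ < 1) (hs0 : 0 < s) (hs : s ≤ (1 - max b ξ)/2) (hsα : 3 * s ≤ (1 - max b ξ)/2 * α)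
    (hδ : 0 ≤ δ) (hkδ : k * δ ≤ s/2)
    (hL : ∀ n z i, L n z i = ∑ j, c n i j * z j) (htri : ∀ n i j, i < j → c n i j = 0)
    (hoff : ∀ n i j, j < i → ‖c n i j‖ ≤ δ) (hdb : ∀ n i, ‖c n i i‖ ≤ b)
    (hda : ∀ n i, α ≤ ‖c n i i‖)
    (hord : ∀ n, ∀ l j i : Fin k, l ≤ j → ‖c n i i‖ * ‖c n j j‖ ≤ ξ * ‖c n l l‖) :
    LinHyp L (fun n i => c n i i) := by
  have hmx : ∀ n, ∃ i0, ∀ i, ‖c n i i‖ ≤ ‖c n i0 i0‖ := fun n =>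
    Finite.exists_max fun i => ‖c n i i‖
  choose i0 hi0 using hmx
  have hmx2 : ∀ n i, ∃ j0, i ≤ j0 ∧ ∀ j, i ≤ j → ‖c n j j‖ ≤ ‖c n j0 j0‖ := by
    intro n i
    obtain ⟨j0, h1, h2⟩ := Finset.exists_max_image (Finset.Ici i) (fun j => ‖c n j j‖)
      ⟨i, Finset.mem_Ici.2 le_rfl⟩
    exact ⟨j0, Finset.mem_Ici.1 h1, fun j hj => h2 j (Finset.mem_Ici.2 hj)⟩
  choose j0 hj0 hj0' using hmx2
  have hbm := le_max_left b ξ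
  have hξm := le_max_right b ξ
  have hm1 : max b ξ < 1 := max_lt hb hξ
  have hrow : ∀ n z m, ‖L n z m‖ ≤ (‖c n m m‖ + s/2) * ‖z‖ := by
    intro n z m
    rw [hL]
    refine (row_bound hδ (m := m) (fun j hj => ?_) z).trans (by gcongr)
    rcases lt_or_gt_of_ne hj with h | h
    · exact hoff n m j h
    · rw [htri n m j h]; simpa using hδ
  refine ⟨α, (1 + max b ξ)/2, s/2, fun n => ‖c n (i0 n) (i0 n)‖ + s/2,
    fun n i => ‖c n (j0 n i) (j0 n i)‖ + s/2, hα, by linarith, by linarith, by linarith,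
    fun n => ⟨⟨by positivity, ?_, fun z => ?_⟩, fun i => ⟨hda n i, ?_, fun z hz => ⟨?_, ?_⟩⟩⟩⟩
  · have := hdb n (i0 n); linarith
  · rw [pi_norm_le_iff_of_nonneg (by positivity)]
    intro m
    refine (hrow n z m).trans ?_
    refine mul_le_mul_of_nonneg_right ?_ (norm_nonneg _)
    have := hi0 n m
    dsimp only
    linarith
  · dsimp only
    have h1 := hord n i (j0 n i) (i0 n) (hj0 n i)
    have h2 := hdb n (i0 n)
    have h3 := hdb n (j0 n i)
    have h4 := hda n i
    have h5 : 0 ≤ ‖c n (i0 n) (i0 n)‖ := norm_nonneg _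
    have h6 : 0 ≤ ‖c n (j0 n i) (j0 n i)‖ := norm_nonneg _
    generalize ‖c n (i0 n) (i0 n)‖ = μ at *
    generalize ‖c n (j0 n i) (j0 n i)‖ = ν at *
    generalize ‖c n i i‖ = ℓ at *
    have g1 : (μ + s/2 + s/2) * (ν + s/2 + s/2) ≤ ξ * ℓ + 3 * s := by
      nlinarith
    have g2 : (1 - max b ξ)/2 * α ≤ (1 - max b ξ)/2 * ℓ := by
      apply mul_le_mul_of_nonneg_left h4; linarith
    have g3 : ξ * ℓ ≤ max b ξ * ℓ := by
      apply mul_le_mul_of_nonneg_right hξm; linarith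
    nlinarith
  · rw [pi_norm_le_iff_of_nonneg (by positivity)]
    intro m
    by_cases hm : m < i
    · have : L n z m = 0 := by
        rw [hL]
        refine Finset.sum_eq_zero fun j _ => ?_
        by_cases hj : j < i
        · rw [hz j hj, mul_zero]
        · rw [htri n m j (hm.trans_le (not_lt.1 hj)), zero_mul]
      rw [this, norm_zero]; positivity
    · refine (hrow n z m).trans ?_
      refine mul_le_mul_of_nonneg_right ?_ (norm_nonneg _)
      have := hj0' n i m (not_lt.1 hm)
      dsimp only
      linarith
  · rw [hL]
    refine Finset.sum_eq_single i (fun j _ hj => ?_) (fun h => absurd (Finset.mem_univ i) h)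
    rcases lt_or_gt_of_ne hj with h | h
    · rw [hz j h, mul_zero]
    · rw [htri n i j h, zero_mul]

lemma fderiv_expand {k : ℕ} (F : Ck k → Ck k) (v : Ck k) (i : Fin k) :
    fderiv ℂ F 0 v i = ∑ j, derivMatrix F i j * v j := by
  have hv : v = ∑ j, v j • EuclideanSpace.single j (1:ℂ) := by
    ext l
    simp [Pi.single_apply]
  conv_lhs => rw [hv]
  rw [map_sum]
  simp only [map_smul, derivMatrix]
  simp [mul_comm]

def scaleTo (k : ℕ) (δ : ℝ) : Ck k →L[ℂ] (Fin k → ℂ) :=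
  ContinuousLinearMap.pi fun j => ((δ:ℂ)^(j:ℕ)) • (EuclideanSpace.proj j : Ck k →L[ℂ] ℂ)

def scaleFrom (k : ℕ) (δ : ℝ) : (Fin k → ℂ) →L[ℂ] Ck k :=
  (EuclideanSpace.equiv (Fin k) ℂ).symm.toContinuousLinearMap ∘L
    ContinuousLinearMap.pi fun j => ((δ:ℂ)⁻¹^(j:ℕ)) • (ContinuousLinearMap.proj j : (Fin k → ℂ) →L[ℂ] ℂ)

lemma scaleTo_apply {k : ℕ} {δ : ℝ} (z : Ck k) (j : Fin k) : scaleTo k δ z j = (δ:ℂ)^(j:ℕ) * z j := by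
  simp [scaleTo]

lemma scaleFrom_apply {k : ℕ} {δ : ℝ} (z : Fin k → ℂ) (j : Fin k) :
    scaleFrom k δ z j = (δ:ℂ)⁻¹^(j:ℕ) * z j := by
  simp [scaleFrom]

lemma scale_tf {k : ℕ} {δ : ℝ} (hδ : δ ≠ 0) (z : Fin k → ℂ) : scaleTo k δ (scaleFrom k δ z) = z := by
  ext j
  have : (δ:ℂ) ≠ 0 := by exact_mod_cast hδ
  rw [scaleTo_apply, scaleFrom_apply, inv_pow, mul_inv_cancel_left₀ (pow_ne_zero _ this)]

lemma scale_ft {k : ℕ} {δ : ℝ} (hδ : δ ≠ 0) (z : Ck k) : scaleFrom k δ (scaleTo k δ z) = z := by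
  ext j
  have : (δ:ℂ) ≠ 0 := by exact_mod_cast hδ
  rw [scaleFrom_apply, scaleTo_apply, inv_pow, inv_mul_cancel_left₀ (pow_ne_zero _ this)]

end Final

set_option maxHeartbeats 1000000 in
/-- **Theorem (stable).** The basin of attraction of a uniformly attracting sequence of
correctly ordered automorphisms of `ℂ^k` is biholomorphic to `ℂ^k`. -/
theorem basin_of_uniformly_attracting_biholo (k : ℕ) (F : ℕ → Ck k → Ck k)
    (hauto : ∀ n, IsAutomorphism (F n)) (hfix : ∀ n, F n 0 = 0)
    (hord : ∀ n, CorrectlyOrdered (F n))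
    (hua : UniformlyAttracting F) :
    BiholoToC {z : Ck k | Tendsto (fun n => seqComp F n z) atTop (𝓝 0)} := by
  rcases Nat.eq_zero_or_pos k with hk | hk
  · subst hk
    refine ⟨id, id, differentiableOn_id, differentiable_id, fun w => ?_, fun _ _ => rfl, fun _ => rfl⟩
    have : (fun n => seqComp F n (id w)) = fun _ => 0 := by
      funext n; exact Subsingleton.elim _ _
    simp only [Set.mem_setOf_eq]
    rw [this]; exact tendsto_const_nhds
  haveI : Nonempty (Fin k) := ⟨⟨0, hk⟩⟩
  obtain ⟨a, b, ha, hab, hb1, hbd, ξ, hξ, hlam⟩ := hua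
  choose hFd Fi hFid hFl hFr using hauto
  have hder := fun n => fderiv_bounds (hFd n).differentiableAt (hfix n) (hbd n)
  have hb0 : 0 ≤ b := by linarith
  have hent : ∀ n i j, ‖derivMatrix (F n) i j‖ ≤ b := by
    intro n i j
    have h1 := (hder n (EuclideanSpace.single j 1)).2
    have h2 := PiLp.norm_apply_le (fderiv ℂ (F n) 0 (EuclideanSpace.single j 1)) i
    have h3 : ‖(EuclideanSpace.single j (1:ℂ) : Ck k)‖ = 1 := by simp
    rw [h3, mul_one] at h1
    exact h2.trans h1
  let la : Fin k := ⟨k-1, by omega⟩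
  have hla : ∀ i : Fin k, i ≤ la := fun i => by
    change (i:ℕ) ≤ k - 1
    omega
  have hlast : ∀ n, a ≤ ‖derivMatrix (F n) la la‖ := by
    intro n
    have h1 := (hder n (EuclideanSpace.single la 1)).1
    have h3 : ‖(EuclideanSpace.single la (1:ℂ) : Ck k)‖ = 1 := by simp
    have h2 : fderiv ℂ (F n) 0 (EuclideanSpace.single la 1) =
        EuclideanSpace.single la (derivMatrix (F n) la la) := by
      ext i
      by_cases hi : i = la
      · subst hi; simp [derivMatrix]
      · have := (hord n).1 i la (lt_of_le_of_ne (hla i) hi)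
        simp only [derivMatrix] at this
        simp [this, hi]
    rw [h3, mul_one, h2] at h1
    simpa using h1
  have hda : ∀ n i, a * a ≤ ‖derivMatrix (F n) i i‖ := by
    intro n i
    have h1 := hlam n i la la (hla i)
    have h2 := hlast n
    have h3 : a * a ≤ ‖derivMatrix (F n) la la‖ * ‖derivMatrix (F n) la la‖ := by gcongr
    have h4 : ξ * ‖derivMatrix (F n) i i‖ ≤ 1 * ‖derivMatrix (F n) i i‖ := by gcongr
    linarith
  set mx := max b ξ with hmx
  have hmx1 : mx < 1 := max_lt hb1 hξ
  have haa : 0 < a * a := by positivity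
  have haa1 : a * a ≤ 1 := by nlinarith
  set s := (1 - mx)/2 * (a*a) / 3 with hs
  have hs0 : 0 < s := by
    have : 0 < 1 - mx := by linarith
    positivity
  have hs3 : 3 * s = (1 - mx)/2 * (a*a) := by rw [hs]; ring
  have hs1 : s ≤ (1 - mx)/2 := by
    have : (1 - mx)/2 * (a*a) ≤ (1 - mx)/2 * 1 := by
      apply mul_le_mul_of_nonneg_left haa1; linarith
    linarith
  have hb00 : b ≤ mx := le_max_left _ _
  have hk0 : (0:ℝ) < k := by exact_mod_cast hk
  have hk1 : (1:ℝ) ≤ k := by exact_mod_cast hk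
  set δ := s/(2*k) with hδ
  have hδ0 : 0 < δ := by positivity
  have hkδ : k * δ = s/2 := by rw [hδ]; field_simp
  have hδ1 : δ ≤ 1 := by nlinarith
  let T := scaleTo k δ
  let T' := scaleFrom k δ
  have hTT' : ∀ z, T (T' z) = z := scale_tf hδ0.ne'
  have hT'T : ∀ z, T' (T z) = z := scale_ft hδ0.ne'
  let L : ℕ → (Fin k → ℂ) →L[ℂ] (Fin k → ℂ) := fun n => T ∘L (fderiv ℂ (F n) 0) ∘L T'
  let c : ℕ → Fin k → Fin k → ℂ := fun n i j => (δ:ℂ)^(i:ℕ) * derivMatrix (F n) i j * (δ:ℂ)⁻¹^(j:ℕ)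
  have hδc : (δ:ℂ) ≠ 0 := by exact_mod_cast hδ0.ne'
  have hcd : ∀ n i, c n i i = derivMatrix (F n) i i := by
    intro n i
    simp only [c]
    rw [inv_pow]
    field_simp
  have hLin : LinHyp L (fun n i => c n i i) := by
    refine lin_hyp_of (α := a*a) (b := b) (ξ := ξ) (s := s) (δ := δ) haa hb1 hb0 hξ hs0 hs1 hs3.le
      hδ0.le hkδ.le ?_ ?_ ?_ ?_ ?_ ?_
    · intro n z i
      change scaleTo k δ (fderiv ℂ (F n) 0 (scaleFrom k δ z)) i = _
      rw [scaleTo_apply, fderiv_expand, Finset.mul_sum]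
      refine Finset.sum_congr rfl fun j _ => ?_
      rw [scaleFrom_apply]
      simp only [c]; ring
    · intro n i j hij
      simp only [c]
      rw [(hord n).1 i j hij]; ring
    · intro n i j hij
      have hij' : (j:ℕ) < i := hij
      have e : c n i j = (δ:ℂ)^((i:ℕ)-j) * derivMatrix (F n) i j := by
        simp only [c]
        rw [pow_sub₀ _ hδc hij'.le, inv_pow]; ring
      rw [e, norm_mul, norm_pow, Complex.norm_real, Real.norm_of_nonneg hδ0.le]
      have h1 : δ^((i:ℕ)-j) ≤ δ^1 := pow_le_pow_of_le_one hδ0.le hδ1 (by omega)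
      have h2 := hent n i j
      calc δ^((i:ℕ)-j) * ‖derivMatrix (F n) i j‖ ≤ δ^1 * 1 := by
            gcongr
            linarith
        _ = δ := by ring
    · intro n i; rw [hcd]; exact hent n i i
    · intro n i; rw [hcd]; exact hda n i
    · intro n l j i hlj; rw [hcd, hcd, hcd]; exact hlam n l j i hlj
  let f : ℕ → (Fin k → ℂ) → (Fin k → ℂ) := fun n z => T (F n (T' z))
  let fi : ℕ → (Fin k → ℂ) → (Fin k → ℂ) := fun n z => T (Fi n (T' z))
  have hfd : ∀ n, Differentiable ℂ (f n) := fun n =>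
    T.differentiable.comp ((hFd n).comp T'.differentiable)
  have hfid : ∀ n, Differentiable ℂ (fi n) := fun n =>
    T.differentiable.comp ((hFid n).comp T'.differentiable)
  have hAdm : Adm L f := by
    refine ⟨1/(‖T'‖+1), ‖T‖, by positivity, fun n => ⟨(hfd n).differentiableOn, ?_, ?_, ?_⟩⟩
    · simp [f, hfix]
    · have h1 : HasFDerivAt (F n) (fderiv ℂ (F n) 0) (T' 0) := by
        rw [map_zero]; exact ((hFd n) 0).hasFDerivAt
      exact T.hasFDerivAt.comp 0 (h1.comp 0 T'.hasFDerivAt)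
    · intro z hz
      rw [mem_ball_zero_iff, lt_div_iff₀ (by positivity)] at hz
      have h1 : ‖T' z‖ < 1 := by
        have := T'.le_opNorm z
        nlinarith [norm_nonneg z]
      have h2 := (hbd n (T' z) (by rwa [mem_ball_zero_iff])).2
      have h3 : ‖F n (T' z)‖ ≤ 1 := by nlinarith [norm_nonneg (T' z)]
      calc ‖T (F n (T' z))‖ ≤ ‖T‖ * ‖F n (T' z)‖ := T.le_opNorm _
        _ ≤ ‖T‖ * 1 := by gcongr
        _ = ‖T‖ := mul_one _
  obtain ⟨Ψ, Φ, hΨ, hΦ, h1, h2, h3⟩ := main_pi (fi := fi) hLin hAdm hfd hfid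
    (fun n x => by simp only [f, fi]; rw [hT'T, hFr n, hTT'])
    (fun n x => by simp only [f, fi]; rw [hT'T, hFl n, hTT'])
  have hsc : ∀ n z, seqComp f n (T z) = T (seqComp F n z) := by
    intro n z
    induction n with
    | zero => rfl
    | succ n ih =>
      simp only [seqComp, Function.comp_apply]
      rw [ih]
      simp only [f]; rw [hT'T]
  have hto : ∀ z, Tendsto (fun n => seqComp F n z) atTop (𝓝 0) →
      Tendsto (fun n => seqComp f n (T z)) atTop (𝓝 0) := by
    intro z hz
    simp only [hsc]
    have := (T.continuous.tendsto 0).comp hz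
    rwa [map_zero] at this
  have hfrom : ∀ w, Tendsto (fun n => seqComp f n w) atTop (𝓝 0) →
      Tendsto (fun n => seqComp F n (T' w)) atTop (𝓝 0) := by
    intro w hw
    have := (T'.continuous.tendsto 0).comp hw
    rw [map_zero] at this
    refine this.congr fun n => ?_
    rw [Function.comp_apply, ← hTT' w, hsc, hT'T, hTT']
  refine ⟨fun z => T' (Ψ (T z)), fun w => T' (Φ (T w)), ?_, ?_, ?_, ?_, ?_⟩
  · exact T'.differentiable.comp_differentiableOn
      (hΨ.comp T.differentiable.differentiableOn fun z hz => hto z hz)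
  · exact T'.differentiable.comp (hΦ.comp T.differentiable)
  · intro w; exact hfrom _ (h1 _)
  · intro z hz
    dsimp only
    rw [hTT', h2 _ (hto z hz), hT'T]
  · intro w
    dsimp only
    rw [hTT', h3, hT'T]
end
end

section
/- Let f_1, f_2, … be a sequence of automorphisms of ℂ^k, each fixing the origin, and let a, b ∈ ℝ satisfy 0 < a < b < 1 and b² < a. Suppose that for every n and every z in the open unit ball B, a‖z‖ ≤ ‖f_n(z)‖ ≤ b‖z‖. Then the basin of attraction {z ∈ ℂ^k : f(n)(z) → 0} is biholomorphic to ℂ^k. -/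
open Metric Filter Topology

noncomputable section

section Helpers

variable {E : Type*} [NormedAddCommGroup E] [NormedSpace ℂ E]

/-- Composition of the linear parts. -/
def compA (A : ℕ → E ≃L[ℂ] E) : ℕ → E ≃L[ℂ] E
  | 0 => ContinuousLinearEquiv.refl ℂ E
  | n + 1 => (compA A n).trans (A n)

theorem seqComp_add {α : Type*} (f : ℕ → α → α) (m n : ℕ) (z : α) :
    seqComp f (m + n) z = seqComp (fun i => f (m + i)) n (seqComp f m z) := by
  induction n with
  | zero => rfl
  | succ n ih => rw [← add_assoc]; simp only [seqComp, Function.comp_apply, ih]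

theorem compA_add (A : ℕ → E ≃L[ℂ] E) (m n : ℕ) (z : E) :
    compA A (m + n) z = compA (fun i => A (m + i)) n (compA A m z) := by
  induction n with
  | zero => rfl
  | succ n ih =>
    rw [← add_assoc]; simp only [compA, ContinuousLinearEquiv.trans_apply, ih]

theorem compA_add_symm (A : ℕ → E ≃L[ℂ] E) (m n : ℕ) (z : E) :
    (compA A (m + n)).symm z = (compA A m).symm ((compA (fun i => A (m + i)) n).symm z) := by
  rw [ContinuousLinearEquiv.symm_apply_eq, compA_add]
  simp

theorem compA_symm_bound (A : ℕ → E ≃L[ℂ] E) {a : ℝ} (ha : 0 < a)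
    (hA : ∀ n v, a * ‖v‖ ≤ ‖A n v‖) (n : ℕ) (v : E) :
    ‖(compA A n).symm v‖ ≤ (a⁻¹) ^ n * ‖v‖ := by
  induction n generalizing v with
  | zero => simp [compA]
  | succ n ih =>
    have h1 := ih ((A n).symm v)
    have h2 := hA n ((A n).symm v)
    rw [ContinuousLinearEquiv.apply_symm_apply] at h2
    have h3 : ‖(A n).symm v‖ ≤ a⁻¹ * ‖v‖ := by
      rw [inv_mul_eq_div, le_div_iff₀ ha]; linarith
    calc ‖(compA A (n+1)).symm v‖ = ‖(compA A n).symm ((A n).symm v)‖ := by simp [compA]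
      _ ≤ (a⁻¹) ^ n * ‖(A n).symm v‖ := h1
      _ ≤ (a⁻¹) ^ n * (a⁻¹ * ‖v‖) := by gcongr
      _ = _ := by ring

theorem compA_bound (A : ℕ → E ≃L[ℂ] E) {b : ℝ} (hb : 0 < b)
    (hA : ∀ n v, ‖A n v‖ ≤ b * ‖v‖) (n : ℕ) (v : E) :
    ‖compA A n v‖ ≤ b ^ n * ‖v‖ := by
  induction n with
  | zero => simp [compA]
  | succ n ih =>
    calc ‖compA A (n+1) v‖ = ‖A n (compA A n v)‖ := by simp [compA]
      _ ≤ b * ‖compA A n v‖ := hA _ _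
      _ ≤ b * (b ^ n * ‖v‖) := by gcongr
      _ = _ := by ring

theorem seqComp_bound (f : ℕ → E → E) {b : ℝ} (hb0 : 0 < b) (hb : b < 1)
    (hbd : ∀ n, ∀ z ∈ ball (0 : E) 1, ‖f n z‖ ≤ b * ‖z‖) (n : ℕ) {z : E} (hz : ‖z‖ < 1) :
    ‖seqComp f n z‖ ≤ b ^ n * ‖z‖ := by
  induction n with
  | zero => simp [seqComp]
  | succ n ih =>
    have h1 : ‖seqComp f n z‖ < 1 := by
      have : b ^ n ≤ 1 := pow_le_one₀ hb0.le hb.le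
      nlinarith [norm_nonneg z]
    calc ‖seqComp f (n+1) z‖ = ‖f n (seqComp f n z)‖ := rfl
      _ ≤ b * ‖seqComp f n z‖ := hbd _ _ (by simpa using h1)
      _ ≤ b * (b ^ n * ‖z‖) := by gcongr
      _ = _ := by ring

theorem seqComp_differentiable (f : ℕ → E → E) (hf : ∀ n, Differentiable ℂ (f n)) (n : ℕ) :
    Differentiable ℂ (seqComp f n) := by
  induction n with
  | zero => exact differentiable_id
  | succ n ih => exact (hf n).comp ih

/-- Quadratic estimate. -/
theorem quad_bound (g : E → E) (L : E ≃L[ℂ] E) {b : ℝ} (hb : b < 1)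
    (hg : Differentiable ℂ g) (h0 : g 0 = 0) (hL : HasFDerivAt g (L : E →L[ℂ] E) 0)
    (hbd : ∀ z ∈ ball (0 : E) 1, ‖g z‖ ≤ b * ‖z‖) (hLb : ∀ v, ‖L v‖ ≤ b * ‖v‖)
    {z : E} (hz : ‖z‖ < 1) : ‖g z - L z‖ ≤ 2 * ‖z‖ ^ 2 := by
  have := Complex.dist_le_mul_div_pow_of_mapsTo_ball_of_isLittleO (f := fun z => g z - L z)
    (c := (0 : E)) (z := z) (R₁ := 1) (R₂ := 2) (n := 1)
    ((hg.sub L.differentiable).differentiableOn) ?_ ?_ (by simpa using hz)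
  · simpa [h0] using this
  · intro w hw
    have h1 := hbd w hw
    have h2 := hLb w
    simp only [mem_closedBall, dist_eq_norm, h0, map_zero, sub_zero]
    have h3 := norm_sub_le (g w) (L w)
    have hw' : ‖w‖ < 1 := by simpa using hw
    nlinarith [norm_nonneg w]
  · have := hL.isLittleO
    simp only [h0, map_zero, sub_zero, pow_one] at this ⊢
    simpa using this.norm_right

theorem local_part [CompleteSpace E] {a b r : ℝ} (ha : 0 < a) (hb0 : 0 < b) (hb : b < 1)
    (hsq : b ^ 2 < a) (hr0 : 0 < r) (hr1 : r ≤ 1 / 2) (hr : 16 * r / (a - b ^ 2) ≤ 1 / 2)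
    (f : ℕ → E → E) (A : ℕ → E ≃L[ℂ] E)
    (hf : ∀ n, Differentiable ℂ (f n)) (h0 : ∀ n, f n 0 = 0)
    (hA : ∀ n, HasFDerivAt (f n) (A n : E →L[ℂ] E) 0)
    (hbd : ∀ n, ∀ z ∈ ball (0 : E) 1, ‖f n z‖ ≤ b * ‖z‖)
    (hAb : ∀ n v, ‖A n v‖ ≤ b * ‖v‖) (hAa : ∀ n v, a * ‖v‖ ≤ ‖A n v‖) :
    ∃ P G : E → E,
      (∀ z ∈ ball (0 : E) r,
        Tendsto (fun n => (compA A n).symm (seqComp f n z)) atTop (𝓝 (P z))) ∧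
      DifferentiableOn ℂ P (ball 0 r) ∧ Set.InjOn P (ball 0 r) ∧
      (∀ w ∈ ball (0 : E) (r / 4), G w ∈ ball (0 : E) r ∧ P (G w) = w) ∧
      DifferentiableOn ℂ G (ball 0 (r / 4)) := by
  set q : ℝ := b ^ 2 / a with hq
  have hq0 : 0 ≤ q := by positivity
  have hq1 : q < 1 := by rw [hq, div_lt_one ha]; exact hsq
  set T : ℕ → E → E := fun n z => (compA A n).symm (seqComp f n z) with hT
  set u : ℕ → E → E := fun n z => T (n + 1) z - T n z with hu
  have hTd : ∀ n, Differentiable ℂ (T n) := fun n =>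
    (compA A n).symm.differentiable.comp (seqComp_differentiable f hf n)
  have hud : ∀ n, Differentiable ℂ (u n) := fun n => (hTd (n+1)).sub (hTd n)
  have hub : ∀ n z, ‖z‖ < 1 → ‖u n z‖ ≤ 2 / a * q ^ n * ‖z‖ ^ 2 := by
    intro n z hz
    have hs := seqComp_bound f hb0 hb hbd n hz
    have hs1 : ‖seqComp f n z‖ < 1 := by
      have : b ^ n ≤ 1 := pow_le_one₀ hb0.le hb.le
      nlinarith [norm_nonneg z]
    have hQ := quad_bound (f n) (A n) hb (hf n) (h0 n) (hA n) (hbd n) (hAb n) hs1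
    have e : u n z = (compA A (n+1)).symm (f n (seqComp f n z) - A n (seqComp f n z)) := by
      simp [hu, hT, compA, seqComp]
    rw [e]
    calc _ ≤ (a⁻¹) ^ (n+1) * ‖f n (seqComp f n z) - A n (seqComp f n z)‖ :=
          compA_symm_bound A ha hAa _ _
      _ ≤ (a⁻¹) ^ (n+1) * (2 * (b ^ n * ‖z‖) ^ 2) := by
          gcongr; exact hQ.trans (by gcongr)
      _ = _ := by rw [hq, div_pow, inv_pow, pow_succ]; field_simp; ring
  have hfd : ∀ n, ∀ z ∈ ball (0 : E) r, ‖fderiv ℂ (u n) z‖ ≤ 16 * r / a * q ^ n := by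
    intro n z hz
    have hz' : ‖z‖ < r := by simpa using hz
    have hsup : ∀ y, ‖y‖ < 2 * r → ‖u n y‖ ≤ 2 / a * q ^ n * (2 * r) ^ 2 := fun y hy =>
      (hub n y (by linarith)).trans (by gcongr)
    have := Complex.norm_fderiv_le_div_of_mapsTo_ball (f := u n) (c := z) (R₁ := r)
      (R₂ := 16 * r / a * q ^ n * r) (hud n).differentiableOn ?_ hr0
    · rwa [mul_div_cancel_right₀ _ hr0.ne'] at this
    · intro y hy
      rw [mem_ball, dist_eq_norm] at hy
      rw [mem_closedBall, dist_eq_norm]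
      have hy2 : ‖y‖ < 2 * r := by
        have := norm_sub_norm_le y z
        linarith
      have h1 := hsup y hy2
      have h2 := hsup z (by linarith)
      have h3 := norm_sub_le (u n y) (u n z)
      have h4 : 16 * r / a * q ^ n * r
        = 2 / a * q ^ n * (2 * r) ^ 2 + 2 / a * q ^ n * (2 * r) ^ 2 := by ring
      linarith
  have hsum : HasSum (fun n => 16 * r / a * q ^ n) (16 * r / a * (1 - q)⁻¹) :=
    (hasSum_geometric_of_lt_one hq0 hq1).mul_left _
  have hval : 16 * r / a * (1 - q)⁻¹ ≤ 1 / 2 := by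
    refine le_trans (le_of_eq ?_) hr
    have : a - b ^ 2 ≠ 0 := by linarith
    have h2 : 1 - q = (a - b ^ 2) / a := by rw [hq]; field_simp
    rw [h2]; field_simp
  have hT0 : ∀ n, T n 0 = 0 := by
    intro n
    have : ‖seqComp f n 0‖ ≤ b ^ n * ‖(0 : E)‖ :=
      seqComp_bound f hb0 hb hbd n (by simp)
    have h : seqComp f n 0 = 0 := by simpa using this
    simp [hT, h]
  have hu0 : ∀ n, u n 0 = 0 := fun n => by simp [hu, hT0]
  have hmem0 : (0 : E) ∈ ball (0 : E) r := mem_ball_self hr0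
  have hpre : IsPreconnected (ball (0 : E) r) := (convex_ball _ _).isPreconnected
  have hSder : ∀ z ∈ ball (0 : E) r,
      HasFDerivAt (fun y => ∑' n, u n y) (∑' n, fderiv ℂ (u n) z) z := fun z hz =>
    hasFDerivAt_tsum_of_isPreconnected hsum.summable isOpen_ball hpre
      (fun n x _ => (hud n x).hasFDerivAt) hfd hmem0 (by simp [hu0, summable_zero]) hz
  have hSsum : ∀ z ∈ ball (0 : E) r, Summable (fun n => u n z) := fun z hz =>
    summable_of_summable_hasFDerivAt_of_isPreconnected hsum.summable isOpen_ball hpre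
      (fun n x _ => (hud n x).hasFDerivAt) hfd hmem0 (by simp [hu0, summable_zero]) hz
  have hSb : ∀ z ∈ ball (0 : E) r, ‖∑' n, fderiv ℂ (u n) z‖ ≤ 1 / 2 := fun z hz =>
    (tsum_of_norm_bounded hsum (fun n => hfd n z hz)).trans hval
  set S : E → E := fun y => ∑' n, u n y with hS
  set P : E → E := fun z => z + S z with hP
  have hPder : ∀ z ∈ ball (0 : E) r, ∃ L : E ≃L[ℂ] E, HasFDerivAt P (L : E →L[ℂ] E) z := by
    intro z hz
    set D := ∑' n, fderiv ℂ (u n) z with hD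
    have hDn : ‖-D‖ < 1 := by rw [norm_neg]; linarith [hSb z hz]
    refine ⟨ContinuousLinearEquiv.unitsEquiv ℂ E (Units.oneSub (-D) hDn), ?_⟩
    have h1 := (hasFDerivAt_id (𝕜 := ℂ) z).add (hSder z hz)
    have e : ((ContinuousLinearEquiv.unitsEquiv ℂ E (Units.oneSub (-D) hDn) : E ≃L[ℂ] E) :
        E →L[ℂ] E) = ContinuousLinearMap.id ℂ E + D := by
      ext v
      simp
    rw [e]
    exact h1
  have happ : ApproximatesLinearOn P ((ContinuousLinearEquiv.refl ℂ E : E ≃L[ℂ] E) : E →L[ℂ] E)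
      (ball 0 r) (1 / 2) := by
    intro x hx y hy
    have := Convex.norm_image_sub_le_of_norm_hasFDerivWithin_le (𝕜 := ℂ) (f := S)
      (fun z hz => (hSder z hz).hasFDerivWithinAt) hSb (convex_ball (0 : E) r) hy hx
    have e : P x - P y - ((ContinuousLinearEquiv.refl ℂ E : E ≃L[ℂ] E) : E →L[ℂ] E) (x - y)
        = S x - S y := by simp [hP]; abel
    rw [e]
    simpa using this
  have hc : Subsingleton E ∨ (1 / 2 : NNReal) <
      ‖((ContinuousLinearEquiv.refl ℂ E).symm : E →L[ℂ] E)‖₊⁻¹ := by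
    rcases subsingleton_or_nontrivial E with h | h
    · exact Or.inl h
    · right
      have : ‖((ContinuousLinearEquiv.refl ℂ E).symm : E →L[ℂ] E)‖₊ = 1 := by
        ext; simp
      rw [this]
      rw [← NNReal.coe_lt_coe]; norm_num
  set H := happ.toOpenPartialHomeomorph P (ball 0 r) hc isOpen_ball with hH
  have hP0 : P 0 = 0 := by simp [hP, hS, hu0]
  have htgt : ball (0 : E) (r / 4) ⊆ H.target := by
    intro w hw
    rcases subsingleton_or_nontrivial E with h | h
    · exact ⟨0, hmem0, Subsingleton.elim _ _⟩
    have hsurj := happ.surjOn_closedBall_of_nonlinearRightInverse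
      (ContinuousLinearEquiv.refl ℂ E).toNonlinearRightInverse (ε := r / 2) (b := 0)
      (by positivity) (closedBall_subset_ball (by linarith))
    have hmem : w ∈ closedBall (P 0)
      ((((ContinuousLinearEquiv.refl ℂ E).toNonlinearRightInverse.nnnorm : ℝ)⁻¹
        - ((1 / 2 : NNReal) : ℝ)) * (r / 2)) := by
      · have e : ((ContinuousLinearEquiv.refl ℂ E).toNonlinearRightInverse.nnnorm : ℝ) = 1 := by
          change ‖((ContinuousLinearEquiv.refl ℂ E).symm : E →L[ℂ] E)‖ = 1
          simp
        rw [e, hP0]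
        have hw' : ‖w‖ < r / 4 := by simpa using hw
        rw [mem_closedBall, dist_zero_right]
        push_cast
        linarith
    obtain ⟨x, hx, rfl⟩ := hsurj hmem
    exact ⟨x, closedBall_subset_ball (by linarith) hx, rfl⟩
  refine ⟨P, H.symm, ?_, ?_, happ.injOn hc, ?_, ?_⟩
  · intro z hz
    have h1 := (hSsum z hz).hasSum.tendsto_sum_nat
    have h2 : ∀ n, T n z = z + ∑ i ∈ Finset.range n, u i z := by
      intro n
      rw [Finset.sum_range_sub (fun n => T n z)]
      simp [hT, compA, seqComp]
    change Tendsto (fun n => T n z) atTop _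
    simp only [h2]
    exact h1.const_add z
  · intro z hz
    obtain ⟨L, hL⟩ := hPder z hz
    exact hL.differentiableAt.differentiableWithinAt
  · intro w hw
    exact ⟨H.map_target (htgt hw), H.right_inv (htgt hw)⟩
  · intro w hw
    obtain ⟨L, hL⟩ := hPder (H.symm w) (H.map_target (htgt hw))
    exact (H.hasFDerivAt_symm (htgt hw) hL).differentiableAt.differentiableWithinAt

end Helpers

/-- **Theorem (square).** Let `f_0, f_1, …` be automorphisms of `ℂ^k` fixing the origin and
`0 < a < b < 1` with `b² < a` and `a‖z‖ ≤ ‖f_n z‖ ≤ b‖z‖` on the unit ball. Then the basin of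
attraction is biholomorphic to `ℂ^k`. -/
theorem basin_square_biholo (k : ℕ) (f : ℕ → Ck k → Ck k)
    (hauto : ∀ n, IsAutomorphism (f n)) (hfix : ∀ n, f n 0 = 0)
    (a b : ℝ) (ha : 0 < a) (hab : a < b) (hb : b < 1) (hsq : b ^ 2 < a)
    (hbd : ∀ n, ∀ z ∈ ball (0 : Ck k) 1,
      a * ‖z‖ ≤ ‖f n z‖ ∧ ‖f n z‖ ≤ b * ‖z‖) :
    BiholoToC {z : Ck k | Tendsto (fun n => seqComp f n z) atTop (𝓝 0)} := by
  have hb0 : 0 < b := ha.trans hab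
  have hfd : ∀ n, Differentiable ℂ (f n) := fun n => (hauto n).1
  choose finv hfinvd hleft hright using fun n => (hauto n).2
  -- linear parts
  have hlin : ∀ n, ∃ L : Ck k ≃L[ℂ] Ck k, HasFDerivAt (f n) (L : Ck k →L[ℂ] Ck k) 0 ∧
      (∀ v, ‖L v‖ ≤ b * ‖v‖) ∧ (∀ v, a * ‖v‖ ≤ ‖L v‖) := by
    intro n
    set D := fderiv ℂ (f n) 0 with hD
    have hDf : HasFDerivAt (f n) D 0 := (hfd n 0).hasFDerivAt
    have hlim : ∀ v : Ck k, Tendsto (fun j : ℕ => ‖((j : ℂ) • f n (((j : ℂ))⁻¹ • v))‖)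
        atTop (𝓝 ‖D v‖) := by
      intro v
      have := hDf.lim (α := ℕ) (l := atTop) (c := fun j : ℕ => (j : ℂ)) v
        (by simpa using tendsto_natCast_atTop_atTop (R := ℝ))
      simpa [hfix n] using this.norm
    have hsmall : ∀ v : Ck k, ∀ᶠ j : ℕ in atTop,
        0 < (j : ℝ) ∧ ((j : ℂ))⁻¹ • v ∈ ball (0 : Ck k) 1 := by
      intro v
      filter_upwards [eventually_gt_atTop ⌈‖v‖⌉₊] with j hj
      have h1 : ‖v‖ < j := (Nat.le_ceil _).trans_lt (by exact_mod_cast hj)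
      have hj0 : 0 < (j : ℝ) := (norm_nonneg v).trans_lt h1
      refine ⟨hj0, ?_⟩
      rw [mem_ball_zero_iff, norm_smul, norm_inv, Complex.norm_natCast, inv_mul_eq_div,
        div_lt_one hj0]
      exact h1
    have hub : ∀ v, ‖D v‖ ≤ b * ‖v‖ := by
      intro v
      refine le_of_tendsto (hlim v) ?_
      filter_upwards [hsmall v] with j ⟨hj, hm⟩
      have := (hbd n _ hm).2
      rw [norm_smul, Complex.norm_natCast]
      rw [norm_smul, norm_inv, Complex.norm_natCast] at this
      calc (j : ℝ) * _ ≤ j * (b * ((j : ℝ)⁻¹ * ‖v‖)) := by gcongr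
        _ = _ := by field_simp
    have hlb : ∀ v, a * ‖v‖ ≤ ‖D v‖ := by
      intro v
      refine ge_of_tendsto (hlim v) ?_
      filter_upwards [hsmall v] with j ⟨hj, hm⟩
      have := (hbd n _ hm).1
      rw [norm_smul, Complex.norm_natCast]
      rw [norm_smul, norm_inv, Complex.norm_natCast] at this
      calc a * ‖v‖ = j * (a * ((j : ℝ)⁻¹ * ‖v‖)) := by field_simp
        _ ≤ _ := by gcongr
    have hinj : Function.Injective (D : Ck k →ₗ[ℂ] Ck k) := by
      rw [← LinearMap.ker_eq_bot, LinearMap.ker_eq_bot']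
      intro v hv
      have h1 := hlb v
      have h2 : D v = 0 := hv
      rw [h2, norm_zero] at h1
      have : ‖v‖ ≤ 0 := by
        by_contra h
        push Not at h
        nlinarith
      simpa using this
    refine ⟨(LinearEquiv.ofInjectiveEndo (D : Ck k →ₗ[ℂ] Ck k) hinj).toContinuousLinearEquiv,
      ?_, hub, hlb⟩
    have e : (((LinearEquiv.ofInjectiveEndo (D : Ck k →ₗ[ℂ] Ck k)
        hinj).toContinuousLinearEquiv : Ck k ≃L[ℂ] Ck k) : Ck k →L[ℂ] Ck k) = D := by
      ext1 v
      rfl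
    rw [e]
    exact hDf
  choose A hA hAb hAa using hlin
  set r : ℝ := min (1 / 2) ((a - b ^ 2) / 32) with hr
  have hr0 : 0 < r := lt_min (by norm_num) (by linarith)
  have hr1 : r ≤ 1 / 2 := min_le_left _ _
  have hr2 : 16 * r / (a - b ^ 2) ≤ 1 / 2 := by
    have : r ≤ (a - b ^ 2) / 32 := min_le_right _ _
    rw [div_le_iff₀ (by linarith)]; linarith
  have hloc := fun m => local_part ha hb0 hb hsq hr0 hr1 hr2 (fun i => f (m + i))
    (fun i => A (m + i)) (fun n => hfd _) (fun n => hfix _) (fun n => hA _)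
    (fun n z hz => (hbd _ z hz).2) (fun n => hAb _) (fun n => hAa _)
  choose P G hPlim hPd hPinj hG hGd using hloc
  set Ω : Set (Ck k) := {z : Ck k | Tendsto (fun n => seqComp f n z) atTop (𝓝 0)} with hΩ
  have hΩev : ∀ z ∈ Ω, ∀ᶠ m in atTop, seqComp f m z ∈ ball (0 : Ck k) r := fun z hz =>
    hz.eventually (ball_mem_nhds _ hr0)
  have hΩof : ∀ z m, seqComp f m z ∈ ball (0 : Ck k) r → z ∈ Ω := by
    intro z m hm
    have hm' : ‖seqComp f m z‖ < 1 := by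
      have : ‖seqComp f m z‖ < r := by simpa using hm
      linarith
    change Tendsto (fun n => seqComp f n z) atTop (𝓝 0)
    rw [← tendsto_add_atTop_iff_nat m]
    have hb' : Tendsto (fun n => b ^ n * ‖seqComp f m z‖) atTop (𝓝 0) := by
      simpa using (tendsto_pow_atTop_nhds_zero_of_lt_one hb0.le hb).mul_const ‖seqComp f m z‖
    refine squeeze_zero_norm (fun n => ?_) hb'
    rw [add_comm n m, seqComp_add]
    exact seqComp_bound (fun i => f (m + i)) hb0 hb (fun n z hz => (hbd _ z hz).2) n hm'
  have hFd := seqComp_differentiable f hfd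
  have hFinv : ∀ m, ∃ g : Ck k → Ck k, Differentiable ℂ g ∧
      Function.LeftInverse g (seqComp f m) ∧ Function.RightInverse g (seqComp f m) := by
    intro m
    induction m with
    | zero => exact ⟨id, differentiable_id, fun _ => rfl, fun _ => rfl⟩
    | succ m ih =>
      obtain ⟨g, hg1, hg2, hg3⟩ := ih
      exact ⟨g ∘ finv m, hg1.comp (hfinvd m), (hleft m).comp hg2, (hright m).comp hg3⟩
  choose F' hF'd hF'l hF'r using hFinv
  set Ψ : Ck k → Ck k := fun z =>
    limUnder atTop (fun n => (compA A n).symm (seqComp f n z)) with hΨ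
  have hΨeq : ∀ z m, seqComp f m z ∈ ball (0 : Ck k) r →
      Ψ z = (compA A m).symm (P m (seqComp f m z)) := by
    intro z m hm
    refine Tendsto.limUnder_eq ?_
    rw [← tendsto_add_atTop_iff_nat m]
    have h1 := hPlim m _ hm
    have h2 := ((compA A m).symm.continuous.tendsto _).comp h1
    refine h2.congr fun n => ?_
    simp only [Function.comp_apply]
    rw [add_comm n m, seqComp_add, compA_add_symm]
  have hΨinj : ∀ z ∈ Ω, ∀ z' ∈ Ω, Ψ z = Ψ z' → z = z' := by
    intro z hz z' hz' h
    obtain ⟨m, h1, h2⟩ := ((hΩev z hz).and (hΩev z' hz')).exists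
    rw [hΨeq z m h1, hΨeq z' m h2] at h
    exact (hF'l m).injective (hPinj m h1 h2 ((compA A m).symm.injective h))
  have hloc2 : ∀ m w, compA A m w ∈ ball (0 : Ck k) (r / 4) →
      F' m (G m (compA A m w)) ∈ Ω ∧ Ψ (F' m (G m (compA A m w))) = w := by
    intro m w hw
    obtain ⟨h1, h2⟩ := hG m _ hw
    have h3 : seqComp f m (F' m (G m (compA A m w))) = G m (compA A m w) := hF'r m _
    have h4 : seqComp f m (F' m (G m (compA A m w))) ∈ ball (0 : Ck k) r := by rw [h3]; exact h1
    refine ⟨hΩof _ m h4, ?_⟩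
    rw [hΨeq _ m h4, h3, h2]
    simp
  have hex : ∀ w, ∃ m, compA A m w ∈ ball (0 : Ck k) (r / 4) := by
    intro w
    have hb' : Tendsto (fun n => b ^ n * ‖w‖) atTop (𝓝 0) := by
      simpa using (tendsto_pow_atTop_nhds_zero_of_lt_one hb0.le hb).mul_const ‖w‖
    obtain ⟨m, hm⟩ := (hb'.eventually (gt_mem_nhds (show (0:ℝ) < r / 4 by positivity))).exists
    exact ⟨m, by simpa using (compA_bound A hb0 hAb m w).trans_lt hm⟩
  have hsurj : ∀ w, ∃ z ∈ Ω, Ψ z = w := by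
    intro w
    obtain ⟨m, hm⟩ := hex w
    exact ⟨_, hloc2 m w hm⟩
  choose Φ hΦ1 hΦ2 using hsurj
  refine ⟨Ψ, Φ, ?_, ?_, hΦ1, fun z hz => hΨinj _ (hΦ1 _) _ hz (hΦ2 _), hΦ2⟩
  · intro z hz
    obtain ⟨m, hm⟩ := (hΩev z hz).exists
    have hev : ∀ᶠ z' in 𝓝 z, seqComp f m z' ∈ ball (0 : Ck k) r :=
      (hFd m).continuous.continuousAt.eventually (isOpen_ball.mem_nhds hm)
    have h1 : DifferentiableAt ℂ (fun z => (compA A m).symm (P m (seqComp f m z))) z := by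
      refine (compA A m).symm.differentiable.differentiableAt.comp z ?_
      exact ((hPd m).differentiableAt (isOpen_ball.mem_nhds hm)).comp z (hFd m z)
    exact (h1.congr_of_eventuallyEq
      (hev.mono fun z' hz' => hΨeq z' m hz')).differentiableWithinAt
  · intro w
    obtain ⟨m, hm⟩ := hex w
    have hev : ∀ᶠ w' in 𝓝 w, compA A m w' ∈ ball (0 : Ck k) (r / 4) :=
      (compA A m).continuous.continuousAt.eventually (isOpen_ball.mem_nhds hm)
    have h1 : DifferentiableAt ℂ (fun w => F' m (G m (compA A m w))) w := by
      refine (hF'd m _).comp w ?_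
      exact ((hGd m).differentiableAt (isOpen_ball.mem_nhds hm)).comp w
        (compA A m).differentiableAt
    exact h1.congr_of_eventuallyEq (hev.mono fun w' hw' =>
      hΨinj _ (hΦ1 _) _ (hloc2 m w' hw').1 ((hΦ2 w').trans (hloc2 m w' hw').2.symm))
end
end

section
/- Let D ∈ ℕ, M > 0 and θ < 1, and let G_1, G_2, … be a sequence of lower triangular polynomial self-maps of ℂ^k, each of degree at most D, with all coefficients bounded in absolute value by M, and such that for every n the linear diagonal coefficients c_{n,1}, …, c_{n,k} of G_n satisfy |c_{n,j}| < θ for all j. Then G(n) = G_n ∘ ⋯ ∘ G_1 converges to 0 uniformly on compact subsets of ℂ^k: for every R > 0 and ε > 0 there exists N ∈ ℕ such that G(n)(B(R)) ⊆ B(ε) for all n ≥ N. -/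
open Metric Filter Topology

noncomputable section

/-- The polynomial self-map of `ℂ^k` determined by a `k`-tuple of polynomials in `k` variables. -/
def evalPolyMap {k : ℕ} (P : Fin k → MvPolynomial (Fin k) ℂ) : Ck k → Ck k :=
  fun z => (WithLp.equiv 2 (∀ _ : Fin k, ℂ)).symm
    (fun j => MvPolynomial.eval (fun i => z i) (P j))

/-- A polynomial map `G = (g_1, …, g_k)` with `G(0) = 0` is lower triangular if
`g_j(z) = c_j z_j + h_j(z_1, …, z_{j-1})`. -/
def LowerTriPolyMap {k : ℕ} (P : Fin k → MvPolynomial (Fin k) ℂ) : Prop :=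
  ∀ j : Fin k, (P j).coeff 0 = 0 ∧
    ∀ d ∈ (P j).support, d = Finsupp.single j 1 ∨ ∀ i : Fin k, j ≤ i → d i = 0

/-- `polyComp G n` is the polynomial map `G(n) = G_{n-1} ∘ ⋯ ∘ G_0`. -/
def polyComp {k : ℕ} (G : ℕ → Fin k → MvPolynomial (Fin k) ℂ) :
    ℕ → Fin k → MvPolynomial (Fin k) ℂ
  | 0 => fun j => MvPolynomial.X j
  | n + 1 => fun j => MvPolynomial.bind₁ (polyComp G n) (G n j)

lemma seq_aux (θ : ℝ) (h0 : 0 ≤ θ) (h1 : θ < 1) (b : ℕ → ℝ) (hb : Tendsto b atTop (𝓝 0))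
    (a : ℕ → ℝ) (ha0 : ∀ n, 0 ≤ a n) (ha : ∀ n, a (n + 1) = θ * a n + b n) :
    Tendsto a atTop (𝓝 0) := by
  rw [Metric.tendsto_atTop]
  intro ε hε
  have hδ : 0 < ε / 2 * (1 - θ) := by
    have : 0 < 1 - θ := by linarith
    positivity
  obtain ⟨N, hN⟩ := eventually_atTop.1 (hb.eventually (gt_mem_nhds hδ))
  have key : ∀ m, a (N + m) ≤ θ ^ m * a N + ε / 2 := by
    intro m
    induction m with
    | zero => simp; linarith
    | succ m ih =>
      have h2 := hN (N + m) (by omega)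
      have h3 := ha (N + m)
      have h4 := mul_le_mul_of_nonneg_left ih h0
      rw [← add_assoc, h3, pow_succ]
      nlinarith
  have ht : Tendsto (fun m => θ ^ m * a N) atTop (𝓝 0) := by
    simpa using (tendsto_pow_atTop_nhds_zero_of_lt_one h0 h1).mul_const (a N)
  obtain ⟨K, hK⟩ := eventually_atTop.1 (ht.eventually (gt_mem_nhds (half_pos hε)))
  refine ⟨N + K, fun n hn => ?_⟩
  obtain ⟨m, rfl⟩ := Nat.exists_eq_add_of_le (show N ≤ n by omega)
  have h5 := hK m (by omega)
  have h6 := key m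
  rw [Real.dist_eq, sub_zero, abs_of_nonneg (ha0 _)]
  linarith

lemma eval_polyComp_succ {k : ℕ} (G : ℕ → Fin k → MvPolynomial (Fin k) ℂ) (n : ℕ) (j : Fin k)
    (z : Fin k → ℂ) : MvPolynomial.eval z (polyComp G (n + 1) j) =
      MvPolynomial.eval (fun i => MvPolynomial.eval z (polyComp G n i)) (G n j) := by
  show MvPolynomial.eval z (MvPolynomial.bind₁ (polyComp G n) (G n j)) = _
  rw [MvPolynomial.eval, MvPolynomial.eval₂Hom_bind₁]
  rfl

open Classical in
/-- Exponents in the variables before `j`. -/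
def lowExp {k : ℕ} (D : ℕ) (j : Fin k) : Finset (Fin k →₀ ℕ) :=
  (Finset.Iic (Finsupp.equivFunOnFinite.symm fun _ => D)).filter
    (fun d => d ≠ 0 ∧ ∀ i, j ≤ i → d i = 0)

lemma eval_bound {k D : ℕ} {M θ : ℝ} (P : MvPolynomial (Fin k) ℂ) (j : Fin k) (hM : 0 < M)
    (h0 : P.coeff 0 = 0)
    (hs : ∀ d ∈ P.support, d = Finsupp.single j 1 ∨ ∀ i : Fin k, j ≤ i → d i = 0)
    (hdeg : P.totalDegree ≤ D) (hcoef : ∀ d, ‖P.coeff d‖ ≤ M)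
    (hdiag : ‖P.coeff (Finsupp.single j 1)‖ < θ) (x : Fin k → ℂ) (u : Fin k → ℝ)
    (hu : ∀ i, i < j → ‖x i‖ ≤ u i) :
    ‖MvPolynomial.eval x P‖ ≤ θ * ‖x j‖ + ∑ d ∈ lowExp D j, M * ∏ i, |u i| ^ d i := by
  classical
  have hnot : Finsupp.single j 1 ∉ lowExp D j := by
    intro h
    simp only [lowExp, Finset.mem_filter] at h
    have := h.2.2 j le_rfl
    simp at this
  have hsub : P.support ⊆ insert (Finsupp.single j 1) (lowExp D j) := by
    intro d hd
    rcases hs d hd with h | h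
    · simp [h]
    · refine Finset.mem_insert_of_mem ?_
      simp only [lowExp, Finset.mem_filter, Finset.mem_Iic]
      refine ⟨fun i => ?_, ?_, h⟩
      · have h1 := MvPolynomial.le_totalDegree hd
        have h2 : d i ≤ d.sum fun _ e => e := by
          rw [Finsupp.sum_fintype _ _ (by simp)]
          exact Finset.single_le_sum (f := fun i => d i) (by simp) (Finset.mem_univ i)
        simp only [Finsupp.equivFunOnFinite_symm_apply_apply]
        omega
      · rintro rfl
        simp [h0] at hd
  rw [MvPolynomial.eval_eq']
  calc _ ≤ ∑ d ∈ P.support, ‖P.coeff d * ∏ i, x i ^ d i‖ := norm_sum_le _ _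
    _ ≤ ∑ d ∈ insert (Finsupp.single j 1) (lowExp D j), ‖P.coeff d * ∏ i, x i ^ d i‖ :=
      Finset.sum_le_sum_of_subset_of_nonneg hsub (fun _ _ _ => norm_nonneg _)
    _ = ‖P.coeff (Finsupp.single j 1)‖ * ‖x j‖ + ∑ d ∈ lowExp D j,
          ‖P.coeff d * ∏ i, x i ^ d i‖ := by
      rw [Finset.sum_insert hnot, norm_mul]
      congr 3
      rw [Finset.prod_eq_single j]
      · simp
      · intro i _ hi
        simp [Finsupp.single_apply, hi.symm]
      · simp
    _ ≤ _ := by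
      refine add_le_add (mul_le_mul_of_nonneg_right hdiag.le (norm_nonneg _))
        (Finset.sum_le_sum fun d hd => ?_)
      rw [norm_mul, norm_prod]
      refine mul_le_mul (hcoef d) ?_ (Finset.prod_nonneg fun _ _ => norm_nonneg _) hM.le
      refine Finset.prod_le_prod (fun _ _ => norm_nonneg _) fun i _ => ?_
      rw [norm_pow]
      by_cases hij : j ≤ i
      · simp only [lowExp, Finset.mem_filter] at hd
        simp [hd.2.2 i hij]
      · exact pow_le_pow_left₀ (norm_nonneg _) ((hu i (not_le.1 hij)).trans (le_abs_self _)) _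

lemma low_tendsto {k D : ℕ} (M : ℝ) (j : Fin k) (u : Fin k → ℕ → ℝ)
    (hu : ∀ i, i < j → Tendsto (u i) atTop (𝓝 0)) :
    Tendsto (fun n => ∑ d ∈ lowExp D j, M * ∏ i, |u i n| ^ d i) atTop (𝓝 0) := by
  rw [← Finset.sum_const_zero (s := lowExp D j)]
  refine tendsto_finsetSum _ fun d hd => ?_
  simp only [lowExp, Finset.mem_filter] at hd
  obtain ⟨-, hne, hd⟩ := hd
  obtain ⟨i, hi⟩ := Finsupp.ne_iff.1 hne
  have key : Tendsto (fun n => ∏ i, |u i n| ^ d i) atTop (𝓝 (∏ i, (0 : ℝ) ^ d i)) := by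
    refine tendsto_finsetProd _ fun i _ => ?_
    by_cases hij : j ≤ i
    · simp [hd i hij]
    · simpa using ((hu i (not_le.1 hij)).abs).pow (d i)
  rw [Finset.prod_eq_zero (Finset.mem_univ i) (zero_pow hi)] at key
  simpa using key.const_mul M

/-- **Lemma (upper, part (b)).** If moreover the linear diagonal coefficients `c_{n,j}`
(the coefficient of `z_j` in the `j`-th component of `G_n`) satisfy `|c_{n,j}| < θ < 1`,
then `G(n) → 0` uniformly on compact subsets: for every `R > 0` and `ε > 0` there is `N`
such that `G(n)(B(R)) ⊆ B(ε)` for all `n ≥ N`. -/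
theorem lower_triangular_compositions_to_zero (k D : ℕ) (M θ : ℝ) (hM : 0 < M) (hθ : θ < 1)
    (G : ℕ → Fin k → MvPolynomial (Fin k) ℂ)
    (hLT : ∀ n, LowerTriPolyMap (G n))
    (hdeg : ∀ n j, (G n j).totalDegree ≤ D)
    (hcoef : ∀ n j d, ‖(G n j).coeff d‖ ≤ M)
    (hdiag : ∀ n (j : Fin k), ‖(G n j).coeff (Finsupp.single j 1)‖ < θ) :
    ∀ R : ℝ, 0 < R → ∀ ε : ℝ, 0 < ε → ∃ N : ℕ, ∀ n, N ≤ n →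
      evalPolyMap (polyComp G n) '' ball (0 : Ck k) R ⊆ ball (0 : Ck k) ε := by
  intro R hR
  have main : ∀ j : Fin k, ∃ u : ℕ → ℝ, Tendsto u atTop (𝓝 0) ∧
      ∀ n, ∀ z : Ck k, z ∈ ball (0 : Ck k) R →
        ‖MvPolynomial.eval (fun i => z i) (polyComp G n j)‖ ≤ u n := by
    intro j
    induction j using WellFoundedLT.induction with
    | ind j ih =>
      choose! u hu1 hu2 using ih
      have hθ0 : 0 ≤ θ := (norm_nonneg _).trans (hdiag 0 j).le
      let b : ℕ → ℝ := fun n => ∑ d ∈ lowExp D j, M * ∏ i, |u i n| ^ d i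
      have hb0 : ∀ n, 0 ≤ b n := fun n => Finset.sum_nonneg fun d _ =>
        mul_nonneg hM.le (Finset.prod_nonneg fun i _ => by positivity)
      let a : ℕ → ℝ := fun n => Nat.rec R (fun n x => θ * x + b n) n
      have ha : ∀ n, a (n + 1) = θ * a n + b n := fun n => rfl
      have ha0 : ∀ n, 0 ≤ a n := by
        intro n
        induction n with
        | zero => exact hR.le
        | succ n ih => rw [ha]; exact add_nonneg (mul_nonneg hθ0 ih) (hb0 n)
      refine ⟨a, seq_aux θ hθ0 hθ b (low_tendsto M j u hu1) a ha0 ha, fun n z hz => ?_⟩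
      induction n with
      | zero =>
        have h1 : ‖z‖ < R := by simpa using hz
        have h2 := PiLp.norm_apply_le z j
        simp only [polyComp, MvPolynomial.eval_X]
        exact h2.trans h1.le
      | succ n ihn =>
        rw [eval_polyComp_succ, ha]
        refine (eval_bound (G n j) j hM (hLT n j).1 (hLT n j).2 (hdeg n j) (hcoef n j) (hdiag n j)
          _ (fun i => u i n) (fun i hi => hu2 i hi n z hz)).trans ?_
        exact add_le_add (mul_le_mul_of_nonneg_left ihn hθ0) le_rfl
  choose u hu1 hu2 using main
  intro ε hε
  have ht : Tendsto (fun n => √(∑ j, u j n ^ 2)) atTop (𝓝 0) := by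
    have h : Tendsto (fun n => ∑ j, u j n ^ 2) atTop (𝓝 (∑ j : Fin k, (0 : ℝ) ^ 2)) :=
      tendsto_finsetSum _ fun j _ => (hu1 j).pow 2
    simpa using h.sqrt
  obtain ⟨N, hN⟩ := eventually_atTop.1 (ht.eventually (gt_mem_nhds hε))
  refine ⟨N, fun n hn => ?_⟩
  rintro _ ⟨z, hz, rfl⟩
  rw [mem_ball_zero_iff, EuclideanSpace.norm_eq]
  refine lt_of_le_of_lt (Real.sqrt_le_sqrt (Finset.sum_le_sum fun j _ => ?_)) (hN n hn)
  exact pow_le_pow_left₀ (norm_nonneg _) (hu2 j n z hz) 2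
end
end

section
/- Let c > 1 and A, M > 0, and let F_1, F_2, … be a sequence of affine maps of ℂ, F_n(z) = a_n z + b_n, with c ≤ |a_n| ≤ A and |b_n| ≤ M for every n. Then there exists z_0 ∈ ℂ and R > 0 such that the orbit defined by z_n = F_n(z_{n−1}) satisfies |z_n| ≤ R for every n ≥ 0. -/
open Metric Filter Topology

noncomputable section

/-- **Lemma (affine).** Let `F_n(z) = a_n z + b_n` be a uniformly bounded sequence of
expanding affine maps of `ℂ` (`1 < c ≤ |a_n| ≤ A`, `|b_n| ≤ M`). Then there is a starting
point `z_0` whose orbit `z_n = F_n(z_{n-1})` is bounded. -/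
theorem expanding_affine_bounded_orbit (c A M : ℝ) (hc : 1 < c) (hA : 0 < A) (hM : 0 < M)
    (a b : ℕ → ℂ) (ha : ∀ n, c ≤ ‖a n‖ ∧ ‖a n‖ ≤ A) (hb : ∀ n, ‖b n‖ ≤ M) :
    ∃ z : ℕ → ℂ, (∀ n, z (n + 1) = a n * z n + b n) ∧
      ∃ R : ℝ, 0 < R ∧ ∀ n, ‖z n‖ ≤ R := by
  have hc0 : 0 < c := by linarith
  have hane : ∀ n, a n ≠ 0 := fun n h => by
    have := (ha n).1
    rw [h, norm_zero] at this
    linarith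
  have hr0 : (0 : ℝ) ≤ c⁻¹ := by positivity
  have hr1 : c⁻¹ < 1 := inv_lt_one_of_one_lt₀ hc
  let t : ℕ → ℕ → ℂ := fun n k => b (n + k) * ∏ j ∈ Finset.range (k + 1), (a (n + j))⁻¹
  have hinv : ∀ n, ‖(a n)⁻¹‖ ≤ c⁻¹ := fun n => by
    rw [norm_inv]
    exact inv_anti₀ hc0 (ha n).1
  have hbd : ∀ n k, ‖t n k‖ ≤ M * c⁻¹ ^ k := fun n k => by
    have h1 : ‖∏ j ∈ Finset.range (k + 1), (a (n + j))⁻¹‖ ≤ c⁻¹ ^ (k + 1) := by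
      rw [norm_prod]
      calc _ ≤ ∏ j ∈ Finset.range (k + 1), c⁻¹ :=
            Finset.prod_le_prod (fun _ _ => norm_nonneg _) (fun j _ => hinv _)
        _ = _ := by simp
    have h2 : c⁻¹ ^ (k + 1) ≤ c⁻¹ ^ k := pow_le_pow_of_le_one hr0 hr1.le (Nat.le_succ k)
    rw [norm_mul]
    exact mul_le_mul (hb _) (h1.trans h2) (norm_nonneg _) hM.le
  have hg : HasSum (fun k : ℕ => M * c⁻¹ ^ k) (M * (1 - c⁻¹)⁻¹) :=
    (hasSum_geometric_of_lt_one hr0 hr1).mul_left M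
  have hs : ∀ n, Summable (t n) := fun n => Summable.of_norm_bounded hg.summable (hbd n)
  refine ⟨fun n => -∑' k, t n k, fun n => ?_, M * (1 - c⁻¹)⁻¹, ?_, fun n => ?_⟩
  · have h1 : ∀ k, t n (k + 1) = (a n)⁻¹ * t (n + 1) k := fun k => by
      simp only [t]
      rw [Finset.prod_range_succ']
      have e : ∀ j, n + (j + 1) = n + 1 + j := fun j => by omega
      have e2 : ∏ j ∈ Finset.range (k + 1), (a (n + (j + 1)))⁻¹ =
          ∏ j ∈ Finset.range (k + 1), (a (n + 1 + j))⁻¹ :=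
        Finset.prod_congr rfl (fun j _ => by rw [e j])
      rw [e2, e k, add_zero]
      ring
    have h2 : t n 0 = b n * (a n)⁻¹ := by simp [t]
    have h3 := (hs n).tsum_eq_zero_add
    simp only [h1, tsum_mul_left, h2] at h3
    simp only [h3]
    have := hane n
    field_simp
    ring
  · have : 0 < 1 - c⁻¹ := by linarith
    positivity
  · rw [norm_neg]
    exact tsum_of_norm_bounded hg (hbd n)
end
end

section
/- Fix integers d ≥ 1 and D ≥ 1, and constants θ > 1 and M > 0. Let f_1, f_2, … be polynomials of one complex variable of degree at most D of the form f_n(z) = λ_n z + (terms of degree ≥ 2), with θ ≤ |λ_n| ≤ M and all coefficients of f_n bounded in absolute value by M. Let g_n(z) = λ_n^{-1} z, and for a polynomial X let φ_n(X) be the polynomial obtained from g_n ∘ X ∘ f_n by discarding all terms of degree strictly greater than d. Then there exists a constant C > 0 and a sequence X_0, X_1, X_2, … of polynomials of the form X(z) = z + Σ_{j=2}^{d} c_j z^j, with X_n = φ_n(X_{n−1}) for every n ≥ 1, such that all coefficients of all the X_n are bounded in absolute value by C. -/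
open Polynomial

noncomputable section

/-- Truncation of a one-variable polynomial: discard all terms of degree `> d`. -/
def truncPoly (d : ℕ) (p : Polynomial ℂ) : Polynomial ℂ :=
  ∑ j ∈ Finset.range (d + 1), Polynomial.C (p.coeff j) * Polynomial.X ^ j

lemma bdd_solution (θ B : ℝ) (hθ : 1 < θ) (a b : ℕ → ℂ) (ha : ∀ n, θ ≤ ‖a n‖)
    (hb : ∀ n, ‖b n‖ ≤ B) :
    ∃ (c : ℕ → ℂ) (K : ℝ), (∀ n, c (n + 1) = a n * c n + b n) ∧ ∀ n, ‖c n‖ ≤ K := by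
  have hθ0 : 0 < θ := by linarith
  have hB : 0 ≤ B := (norm_nonneg _).trans (hb 0)
  let t : ℕ → ℕ → ℂ := fun n k => b (n + k) * ∏ i ∈ Finset.range (k + 1), (a (n + i))⁻¹
  have ht : ∀ n k, ‖t n k‖ ≤ B * (θ⁻¹) ^ k := by
    intro n k
    simp only [t, norm_mul, norm_prod, norm_inv]
    have h1 : ∏ i ∈ Finset.range (k + 1), ‖a (n + i)‖⁻¹ ≤ (θ⁻¹) ^ (k + 1) := by
      calc _ ≤ ∏ i ∈ Finset.range (k + 1), θ⁻¹ := by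
            apply Finset.prod_le_prod
            · intro i _; positivity
            · intro i _
              exact inv_anti₀ hθ0 (ha _)
        _ = _ := by simp
    have h2 : (θ⁻¹) ^ (k + 1) ≤ (θ⁻¹) ^ k :=
      pow_le_pow_of_le_one (by positivity) (inv_le_one_of_one_le₀ hθ.le) (Nat.le_succ k)
    exact mul_le_mul (hb _) (h1.trans h2) (Finset.prod_nonneg fun i _ => by positivity) hB
  have hg : HasSum (fun k : ℕ => B * (θ⁻¹) ^ k) (B * (1 - θ⁻¹)⁻¹) :=
    (hasSum_geometric_of_lt_one (by positivity) (inv_lt_one_of_one_lt₀ hθ)).mul_left B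
  have hs : ∀ n, Summable (t n) := fun n => Summable.of_norm_bounded hg.summable (ht n)
  refine ⟨fun n => -∑' k, t n k, B * (1 - θ⁻¹)⁻¹, ?_, ?_⟩
  · intro n
    have ha0 : a n ≠ 0 := by
      have := ha n
      intro h
      rw [h, norm_zero] at this
      linarith
    have h1 : ∀ k, t n (k + 1) = (a n)⁻¹ * t (n + 1) k := by
      intro k
      simp only [t]
      rw [Finset.prod_range_succ']
      have e : ∀ i, n + (i + 1) = n + 1 + i := fun i => by ring
      rw [e k, Finset.prod_congr rfl (fun i _ => by rw [e i]), add_zero]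
      ring
    have h0 : t n 0 = (a n)⁻¹ * b n := by simp [t, mul_comm]
    simp only
    rw [(hs n).tsum_eq_zero_add, h0]
    simp only [h1]
    rw [tsum_mul_left]
    field_simp
    ring
  · intro n
    rw [norm_neg]
    exact tsum_of_norm_bounded hg (ht n)

lemma coeff_pow_lt (f : Polynomial ℂ) (h : f.coeff 0 = 0) (k j : ℕ) (hj : j < k) :
    (f ^ k).coeff j = 0 := by
  obtain ⟨g, rfl⟩ := Polynomial.X_dvd_iff.2 h
  rw [mul_pow, Polynomial.coeff_X_pow_mul', if_neg (by omega)]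

lemma coeff_pow_self' (f : Polynomial ℂ) (h : f.coeff 0 = 0) (k : ℕ) :
    (f ^ k).coeff k = (f.coeff 1) ^ k := by
  obtain ⟨g, rfl⟩ := Polynomial.X_dvd_iff.2 h
  rw [mul_pow, Polynomial.coeff_X_pow_mul', if_pos le_rfl]
  simp [Polynomial.coeff_zero_eq_eval_zero, Polynomial.coeff_X_mul (n := 0)]

lemma coeff_pow_bdd (M : ℝ) (f : ℕ → Polynomial ℂ) (hcoef : ∀ n j, ‖(f n).coeff j‖ ≤ M)
    (k : ℕ) : ∀ j, ∃ K : ℝ, ∀ n, ‖((f n) ^ k).coeff j‖ ≤ K := by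
  induction k with
  | zero =>
    intro j
    exact ⟨‖(1 : Polynomial ℂ).coeff j‖, fun n => by simp⟩
  | succ k ih =>
    intro j
    choose K hK using ih
    refine ⟨∑ p ∈ Finset.HasAntidiagonal.antidiagonal j, K p.1 * M, fun n => ?_⟩
    rw [pow_succ, Polynomial.coeff_mul]
    refine norm_sum_le_of_le _ fun p _ => ?_
    rw [norm_mul]
    exact mul_le_mul (hK _ _) (hcoef _ _) (norm_nonneg _) ((norm_nonneg _).trans (hK p.1 n))

lemma exists_coeffs (θ M : ℝ) (hθ : 1 < θ)
    (f : ℕ → Polynomial ℂ) (lam : ℕ → ℂ)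
    (hconst : ∀ n, (f n).coeff 0 = 0)
    (hlin : ∀ n, (f n).coeff 1 = lam n)
    (hlam : ∀ n, θ ≤ ‖lam n‖)
    (hcoef : ∀ n j, ‖(f n).coeff j‖ ≤ M) (m : ℕ) :
    ∃ (c : ℕ → ℕ → ℂ) (K : ℕ → ℝ), (∀ n, c 0 n = 0) ∧ (∀ n, c 1 n = 1) ∧
      (∀ j ≤ m + 1, ∀ n, c j (n + 1) =
        (lam n)⁻¹ * ∑ k ∈ Finset.range (j + 1), c k n * ((f n) ^ k).coeff j) ∧
      ∀ j ≤ m + 1, ∀ n, ‖c j n‖ ≤ K j := by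
  have hl0 : ∀ n, lam n ≠ 0 := by
    intro n h
    have := hlam n
    rw [h, norm_zero] at this
    linarith
  induction m with
  | zero =>
    refine ⟨fun j _ => if j = 1 then 1 else 0, fun _ => 1, by simp, by simp, ?_, ?_⟩
    · intro j hj n
      interval_cases j
      · simp
      · simp [Finset.sum_range_succ, hlin, hl0]
    · intro j hj n
      dsimp only
      split_ifs <;> simp
  | succ m ih =>
    obtain ⟨c, K, h0, h1, hr, hb⟩ := ih
    choose L hL using fun k => coeff_pow_bdd M f hcoef k
    let b : ℕ → ℂ := fun n =>
      (lam n)⁻¹ * ∑ k ∈ Finset.range (m + 2), c k n * ((f n) ^ k).coeff (m + 2)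
    obtain ⟨s, S, hs, hS⟩ := bdd_solution θ (1 * ∑ k ∈ Finset.range (m + 2), K k * L k (m + 2)) hθ
      (fun n => lam n ^ (m + 1)) b
      (by
        intro n
        rw [norm_pow]
        exact (hlam n).trans (le_self_pow₀ (hθ.le.trans (hlam n)) (by omega)))
      (by
        intro n
        simp only [b, norm_mul, norm_inv]
        refine mul_le_mul (inv_le_one_of_one_le₀ (hθ.le.trans (hlam n))) ?_ (norm_nonneg _)
          zero_le_one
        refine norm_sum_le_of_le _ fun k hk => ?_
        have hk' := Finset.mem_range.1 hk
        rw [norm_mul]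
        have hk2 := hb k (by omega) n
        exact mul_le_mul hk2 (hL _ _ _) (norm_nonneg _) ((norm_nonneg _).trans hk2))
    refine ⟨Function.update c (m + 2) s, Function.update K (m + 2) S, ?_, ?_, ?_, ?_⟩
    · intro n
      rw [Function.update_of_ne (by omega), h0]
    · intro n
      rw [Function.update_of_ne (by omega), h1]
    · intro j hj n
      have key : ∀ i ≤ m + 2, ∑ k ∈ Finset.range i,
          Function.update c (m + 2) s k n * ((f n) ^ k).coeff j
          = ∑ k ∈ Finset.range i, c k n * ((f n) ^ k).coeff j := by
        intro i hi
        refine Finset.sum_congr rfl fun k hk => ?_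
        have hk' := Finset.mem_range.1 hk
        rw [Function.update_of_ne (by omega)]
      rcases Nat.lt_or_ge j (m + 2) with hj' | hj'
      · rw [Function.update_of_ne (by omega), key _ (by omega), hr j (by omega)]
      · obtain rfl : j = m + 2 := by omega
        rw [Finset.sum_range_succ, key _ le_rfl, Function.update_self, hs,
          coeff_pow_self' _ (hconst n), hlin]
        simp only [b]
        have := hl0 n
        field_simp
        ring
    · intro j hj n
      rcases Nat.lt_or_ge j (m + 2) with hj' | hj'
      · rw [Function.update_of_ne (by omega), Function.update_of_ne (by omega)]
        exact hb j (by omega) n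
      · obtain rfl : j = m + 2 := by omega
        rw [Function.update_self, Function.update_self]
        exact hS n

lemma coeff_sumCX (d : ℕ) (a : ℕ → ℂ) (j : ℕ) :
    (∑ i ∈ Finset.range (d + 1), Polynomial.C (a i) * Polynomial.X ^ i).coeff j
      = if j ≤ d then a j else 0 := by
  simp [Polynomial.finsetSum_coeff, Polynomial.coeff_X_pow, Nat.lt_succ_iff]

/-- **Proposition (bounded orbits in ℂ).** Let `f_n(z) = λ_n z + h.o.t.` be polynomials of
degree `≤ D` with `1 < θ ≤ |λ_n| ≤ M` and all coefficients bounded by `M`, let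
`g_n(z) = λ_n⁻¹ z` and `φ_n(X) = [g_n ∘ X ∘ f_n]_d` (truncation in degree `d`). Then there is
a bounded sequence `X_0, X_1, …` of polynomials of the form `z + Σ_{j=2}^d c_j z^j` with
`X_n = φ_n(X_{n-1})` for every `n ≥ 1`. -/
theorem bounded_orbit_of_truncated_conjugations (d D : ℕ) (hd : 1 ≤ d) (hD : 1 ≤ D)
    (θ M : ℝ) (hθ : 1 < θ) (hM : 0 < M)
    (f : ℕ → Polynomial ℂ) (lam : ℕ → ℂ)
    (hdeg : ∀ n, (f n).natDegree ≤ D)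
    (hconst : ∀ n, (f n).coeff 0 = 0)
    (hlin : ∀ n, (f n).coeff 1 = lam n)
    (hlam : ∀ n, θ ≤ ‖lam n‖ ∧ ‖lam n‖ ≤ M)
    (hcoef : ∀ n j, ‖(f n).coeff j‖ ≤ M) :
    ∃ C : ℝ, 0 < C ∧ ∃ X : ℕ → Polynomial ℂ,
      (∀ n, (X n).coeff 0 = 0 ∧ (X n).coeff 1 = 1 ∧ (X n).natDegree ≤ d) ∧
      (∀ n, X (n + 1) = truncPoly d (Polynomial.C (lam n)⁻¹ * (X n).comp (f n))) ∧
      (∀ n j, ‖(X n).coeff j‖ ≤ C) := by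
  obtain ⟨c, K, h0, h1, hr, hb⟩ := exists_coeffs θ M hθ f lam hconst hlin (fun n => (hlam n).1)
    hcoef d
  refine ⟨1 + ∑ j ∈ Finset.range (d + 1), |K j|, by positivity,
    fun n => ∑ i ∈ Finset.range (d + 1), Polynomial.C (c i n) * Polynomial.X ^ i, ?_, ?_, ?_⟩
  · intro n
    refine ⟨?_, ?_, ?_⟩
    · rw [coeff_sumCX d (fun i => c i n)]; simp [h0]
    · rw [coeff_sumCX d (fun i => c i n)]; simp [h1, hd]
    · rw [Polynomial.natDegree_le_iff_coeff_eq_zero]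
      intro N hN
      rw [coeff_sumCX d (fun i => c i n), if_neg (by omega)]
  · intro n
    unfold truncPoly
    refine Finset.sum_congr rfl fun j hj => ?_
    have hj' := Finset.mem_range.1 hj
    congr 2
    rw [hr j (by omega), Polynomial.coeff_C_mul]
    congr 1
    rw [Polynomial.comp, Polynomial.eval₂_finset_sum, Polynomial.finsetSum_coeff]
    simp only [Polynomial.eval₂_mul, Polynomial.eval₂_C, Polynomial.eval₂_X_pow,
      Polynomial.coeff_C_mul]
    refine Finset.sum_subset (Finset.range_mono (by omega)) fun k hk hk2 => ?_
    rw [coeff_pow_lt _ (hconst n) k j (by simpa using hk2), mul_zero]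
  · intro n j
    rw [coeff_sumCX d (fun i => c i n)]
    have hnn : 0 ≤ ∑ j ∈ Finset.range (d + 1), |K j| := Finset.sum_nonneg fun _ _ => abs_nonneg _
    split_ifs with hj
    · have h2 := Finset.single_le_sum (f := fun j => |K j|) (fun i _ => abs_nonneg _)
        (Finset.mem_range.2 (Nat.lt_succ_of_le hj))
      have h3 := hb j (by omega) n
      have h4 := le_abs_self (K j)
      linarith
    · rw [norm_zero]; linarith
end
end
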